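/- For every integer k ≥ 2 there exist constants C₁, C₂ > 0 (depending only on k) with the following property: for every g ∈ ℤ[x] of degree k, all positive integers a, q with gcd(a,q) = 1, and every Y > 0, one has | ∑_{0 ≤ s ≤ q−1, s ∈ W_q(g;Y)} e(a·g(s)/q) | ≤ C₁·gcd(cont(g), q)³·C₂^{ω(q)}·q^{1−1/k}; moreover if q ≤ Y then the stronger bound | ∑_{0 ≤ s ≤ q−1, s ∈ W_q(g;Y)} e(a·g(s)/q) | ≤ C₁·gcd(cont(g), q)³·C₂^{ω(q)}·q^{1/2} holds. Here ω(q) denotes the number of distinct prime factors of q. -/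

import Mathlib

/-- `γ(g;p)`: the smallest positive integer `γ` such that the derivative `g'` does not vanish
identically modulo `p^γ`. -/
noncomputable def gammaExp (g : Polynomial ℤ) (p : ℕ) : ℕ :=
  sInf {c : ℕ | 0 < c ∧ ¬ ∀ n : ℤ, ((p : ℤ) ^ c) ∣ (Polynomial.derivative g).eval n}

/-- `j(g;p)`: the number of residues `s` modulo `p^{γ(g;p)}` with `g'(s) ≡ 0 (mod p^{γ(g;p)})`. -/
noncomputable def jCount (g : Polynomial ℤ) (p : ℕ) : ℕ := by
  classical
  exact ((Finset.range (p ^ gammaExp g p)).filter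
    (fun s => ((p : ℤ) ^ gammaExp g p) ∣ (Polynomial.derivative g).eval (s : ℤ))).card

/-- `∏_{p ≤ Y} (1 - j(g;p)/p^{γ(g;p)})`, the product being over primes `p ≤ Y`. -/
noncomputable def wProd (g : Polynomial ℤ) (Y : ℝ) : ℝ := by
  classical
  exact ∏ p ∈ (Finset.range (⌊Y⌋₊ + 1)).filter Nat.Prime,
    (1 - (jCount g p : ℝ) / (p : ℝ) ^ gammaExp g p)

/-- `W(g;Y) = {n ∈ ℤ : g'(n) ≢ 0 (mod p^{γ(g;p)}) for all primes p ≤ Y}`. -/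
def WSet (g : Polynomial ℤ) (Y : ℝ) : Set ℤ :=
  {n : ℤ | ∀ p : ℕ, p.Prime → (p : ℝ) ≤ Y →
    ¬ ((p : ℤ) ^ gammaExp g p ∣ (Polynomial.derivative g).eval n)}

/-- `W_q(g;Y) = {n ∈ ℤ : g'(n) ≢ 0 (mod p^{γ(g;p)}) for all primes p ≤ Y with p^{γ(g;p)} ∣ q}`. -/
def WqSet (g : Polynomial ℤ) (Y : ℝ) (q : ℕ) : Set ℤ :=
  {n : ℤ | ∀ p : ℕ, p.Prime → (p : ℝ) ≤ Y → p ^ gammaExp g p ∣ q →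
    ¬ ((p : ℤ) ^ gammaExp g p ∣ (Polynomial.derivative g).eval n)}
/-- `cont(g)`: the gcd of the nonconstant coefficients of `g`. -/
noncomputable def cont (g : Polynomial ℤ) : ℕ :=
  (Finset.Icc 1 g.natDegree).gcd (fun i => (g.coeff i).natAbs)
/-- `e(x) = e^{2πix}`. -/
noncomputable def e (x : ℝ) : ℂ := Complex.exp (2 * Real.pi * Complex.I * x)

section
open Polynomial

theorem stepanov_count (p : ℕ) [hp : Fact p.Prime] (f : (ZMod p)[X]) (hd1 : 1 ≤ f.natDegree)
    (hdp : f.natDegree < p) (μ : ℕ) (K : Type) [Field K] [Fintype K] [DecidableEq K]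
    [Algebra (ZMod p) K]
    (hK : Fintype.card K = (p ^ (μ + 1)) ^ 2) (c : ZMod p) (Z : Finset K)
    (hZ : ∀ x ∈ Z, aeval x (∑ i ∈ Finset.range (μ + 1), f ^ p ^ i) +
      (aeval x (∑ i ∈ Finset.range (μ + 1), f ^ p ^ i)) ^ p ^ (μ + 1) = algebraMap (ZMod p) K c) :
    Z.card ≤ p ^ μ * p ^ (μ + 1) + (2 * f.natDegree + 3) * p ^ (μ + 1) := by
  classical
  set d := f.natDegree with hd
  set r := p ^ (μ + 1) with hr
  set ρ := p ^ μ with hρ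
  set h := ∑ i ∈ Finset.range (μ + 1), f ^ p ^ i with hh
  have hp2 : 2 ≤ p := hp.out.two_le
  have hrρ : r = p * ρ := by rw [hr, hρ, pow_succ, mul_comm]
  have hρ1 : 1 ≤ ρ := Nat.one_le_pow _ _ (by omega)
  have hrp : p ≤ r := by rw [hrρ]; exact Nat.le_mul_of_pos_right _ hρ1
  have hf0 : f ≠ 0 := by rintro rfl; simp [hd] at hd1
  -- degree of h
  have hhdeg : h.natDegree = d * ρ := by
    rw [hh, Finset.sum_range_succ]
    have hlt : (∑ i ∈ Finset.range μ, f ^ p ^ i).degree < (f ^ p ^ μ).degree := by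
      rw [degree_eq_natDegree (pow_ne_zero _ hf0), natDegree_pow]
      refine (Polynomial.degree_sum_le _ _).trans_lt ?_
      rw [Finset.sup_lt_iff (WithBot.bot_lt_coe _)]
      intro i hi
      rw [degree_eq_natDegree (pow_ne_zero _ hf0), natDegree_pow]
      have : p ^ i < p ^ μ := Nat.pow_lt_pow_right (by omega) (Finset.mem_range.1 hi)
      exact_mod_cast Nat.mul_lt_mul_of_pos_right this (by omega)
    rw [natDegree_add_eq_right_of_degree_lt hlt, natDegree_pow, mul_comm]
  have hh0 : h ≠ 0 := by
    rintro h0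
    rw [h0, natDegree_zero] at hhdeg
    have : 0 < d * ρ := by positivity
    omega
  set I := ρ + d + 3 with hI
  set B := r * ρ + I + d * r with hB
  let ι := Fin I × Fin p × Fin ρ
  let Φ : (ι → ZMod p) →ₗ[ZMod p] (ZMod p)[X] :=
    ∑ t : ι, (LinearMap.proj t).smulRight (X ^ (r * t.2.2.1 + t.1.1) * (C c - h) ^ t.2.1.1)
  have hΦ : ∀ v, Φ v = ∑ t : ι, v t • (X ^ (r * t.2.2.1 + t.1.1) * (C c - h) ^ t.2.1.1) := by
    intro v; simp [Φ, LinearMap.sum_apply]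
  have hΦdeg : ∀ v, (Φ v).degree < B := by
    intro v
    rw [hΦ]
    refine (Polynomial.degree_sum_le _ _).trans_lt ?_
    rw [Finset.sup_lt_iff (WithBot.bot_lt_coe _)]
    rintro ⟨i, j, l⟩ -
    refine lt_of_le_of_lt (degree_le_natDegree) ?_
    have h1 : (C c - h).natDegree ≤ d * ρ := by
      refine (natDegree_sub_le _ _).trans ?_
      simp [hhdeg]
    have h2 : (v (i, j, l) • (X ^ (r * l.1 + i.1) * (C c - h) ^ j.1)).natDegree ≤
        (r * l.1 + i.1) + j.1 * (d * ρ) := by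
      refine (natDegree_smul_le _ _).trans ?_
      refine natDegree_mul_le.trans ?_
      rw [natDegree_X_pow]
      gcongr
      refine natDegree_pow_le.trans ?_
      gcongr
    have h3 : r * l.1 ≤ r * ρ := Nat.mul_le_mul_left _ l.2.le
    have h4 : j.1 * (d * ρ) ≤ d * r := by
      rw [hrρ]
      calc j.1 * (d * ρ) ≤ p * (d * ρ) := Nat.mul_le_mul_right _ j.2.le
        _ = _ := by ring
    have h5 := i.2
    have : (v (i, j, l) • (X ^ (r * l.1 + i.1) * (C c - h) ^ j.1)).natDegree < B := by omega
    exact_mod_cast this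
  let Ψ : (ι → ZMod p) →ₗ[ZMod p] (Fin B → ZMod p) :=
    (LinearMap.pi (fun b : Fin B => lcoeff (ZMod p) b.1)).comp Φ
  have hker : LinearMap.ker Ψ ≠ ⊥ := by
    apply LinearMap.ker_ne_bot_of_finrank_lt
    simp only [Module.finrank_fintype_fun_eq_card, Fintype.card_fin, ι, Fintype.card_prod]
    have : I * (p * ρ) = r * ρ + r * d + 3 * r := by rw [← hrρ, hI]; ring
    rw [this, hB, hI]
    have : ρ ≤ r := by rw [hrρ]; exact Nat.le_mul_of_pos_left _ (by omega)
    nlinarith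
  obtain ⟨v, hv, hv0⟩ := (Submodule.ne_bot_iff _).1 hker
  have hΦv : Φ v = 0 := by
    ext n
    by_cases hn : n < B
    · have := congrFun (LinearMap.mem_ker.1 hv) ⟨n, hn⟩
      simpa [Ψ] using this
    · rw [coeff_zero]
      apply coeff_eq_zero_of_degree_lt
      exact (hΦdeg v).trans_le (by exact_mod_cast not_lt.1 hn)
  let G : (ZMod p)[X] := ∑ t : ι, v t • (X ^ (t.2.2.1 + r * t.1.1) * h ^ t.2.1.1)
  have hterm : ∀ t : ι, v t ≠ 0 → (v t • (X ^ (t.2.2.1 + r * t.1.1) * h ^ t.2.1.1)).natDegree =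
      t.2.2.1 + ρ * (p * t.1.1 + d * t.2.1.1) := by
    intro t ht
    rw [natDegree_smul _ ht, natDegree_mul (by simp) (pow_ne_zero _ hh0), natDegree_X_pow,
      natDegree_pow, hhdeg, hrρ]
    ring
  have hterm0 : ∀ t : ι, v t ≠ 0 → (v t • (X ^ (t.2.2.1 + r * t.1.1) * h ^ t.2.1.1)) ≠ 0 := by
    intro t ht
    exact smul_ne_zero ht (mul_ne_zero (by simp) (pow_ne_zero _ hh0))
  have hinj : ∀ t t' : ι, t.2.2.1 + ρ * (p * t.1.1 + d * t.2.1.1) =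
      t'.2.2.1 + ρ * (p * t'.1.1 + d * t'.2.1.1) → t = t' := by
    rintro ⟨i, j, l⟩ ⟨i', j', l'⟩ H
    simp only at H
    have h1 : l.1 = l'.1 := by
      have := congrArg (· % ρ) H
      simpa [Nat.add_mul_mod_self_left, Nat.mod_eq_of_lt l.2, Nat.mod_eq_of_lt l'.2] using this
    have h2 : p * i.1 + d * j.1 = p * i'.1 + d * j'.1 := by
      rw [h1] at H
      exact Nat.eq_of_mul_eq_mul_left hρ1 (by omega)
    have h3 : j.1 = j'.1 := by
      have h4 : d * j.1 ≡ d * j'.1 [MOD p] := by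
        have := congrArg (· % p) h2
        simpa [Nat.ModEq, Nat.mul_add_mod] using this
      have hcop : Nat.gcd p d = 1 := by
        refine (Nat.Prime.coprime_iff_not_dvd hp.out).2 fun hdv => ?_
        exact absurd (Nat.le_of_dvd (by omega) hdv) (by omega)
      have h5 := Nat.ModEq.cancel_left_of_coprime hcop h4
      exact Nat.ModEq.eq_of_lt_of_lt h5 j.2 j'.2
    have h6 : i.1 = i'.1 := by
      rw [h3] at h2
      exact Nat.eq_of_mul_eq_mul_left (show 0 < p by omega) (by omega)
    ext <;> simp [h1, h3, h6]
  have hGdeg : G.degree = Finset.univ.sup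
      (fun t : ι => (v t • (X ^ (t.2.2.1 + r * t.1.1) * h ^ t.2.1.1)).degree) := by
    apply Polynomial.degree_sum_eq_of_disjoint
    rintro t ⟨-, ht⟩ t' ⟨-, ht'⟩ hne heq
    have e1 : v t ≠ 0 := fun h0 => ht (by simp [h0])
    have e2 : v t' ≠ 0 := fun h0 => ht' (by simp [h0])
    simp only [Function.comp] at heq
    rw [degree_eq_natDegree (hterm0 t e1), degree_eq_natDegree (hterm0 t' e2), hterm t e1,
      hterm t' e2] at heq
    exact hne (hinj t t' (by exact_mod_cast heq))
  have hG0 : G ≠ 0 := by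
    intro h0
    obtain ⟨t, ht⟩ := Function.ne_iff.1 hv0
    have : (v t • (X ^ (t.2.2.1 + r * t.1.1) * h ^ t.2.1.1)).degree ≤ G.degree := by
      rw [hGdeg]
      exact Finset.le_sup (f := fun t : ι => (v t • (X ^ (t.2.2.1 + r * t.1.1) *
        h ^ t.2.1.1)).degree) (Finset.mem_univ t)
    rw [h0, degree_zero, le_bot_iff, degree_eq_bot] at this
    exact hterm0 t ht this
  have hGnat : G.natDegree ≤ ρ * r + (2 * d + 3) * r := by
    apply natDegree_sum_le_of_forall_le
    intro t _
    by_cases ht : v t = 0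
    · simp [ht]
    · rw [hterm t ht]
      have h1 := t.1.2
      have h2 := t.2.1.2
      have h3 := t.2.2.2
      have e1 : ρ * (p * t.1.1) ≤ r * (I - 1) := by
        rw [hrρ]
        calc ρ * (p * t.1.1) ≤ ρ * (p * (I - 1)) := by gcongr; omega
          _ = _ := by ring
      have e2 : ρ * (d * t.2.1.1) ≤ d * r := by
        rw [hrρ]
        calc ρ * (d * t.2.1.1) ≤ ρ * (d * p) := by gcongr
          _ = _ := by ring
      have e3 : I - 1 = ρ + d + 2 := by omega
      rw [e3] at e1
      have e4 : ρ ≤ r := by rw [hrρ]; exact Nat.le_mul_of_pos_left _ (by omega)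
      nlinarith
  have hchar : CharP K p := charP_of_injective_algebraMap (algebraMap (ZMod p) K).injective p
  have hroot : ∀ x ∈ Z, aeval x G = 0 := by
    intro x hx
    have hx2 : x ^ (r ^ 2) = x := by rw [← hK]; exact FiniteField.pow_card x
    have key : (aeval x G) ^ r = aeval x (Φ v) := by
      rw [hΦ, map_sum, map_sum, hr, sum_pow_char_pow]
      refine Finset.sum_congr rfl fun t _ => ?_
      rw [← hr]
      have e1 : (aeval x h) ^ r = algebraMap (ZMod p) K c - aeval x h := by
        rw [← hZ x hx]; ring
      simp only [Algebra.smul_def, map_mul, map_pow, aeval_X, map_sub, aeval_C, mul_pow,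
        AlgHom.commutes]
      have e2 : (algebraMap (ZMod p) K (v t)) ^ r = algebraMap (ZMod p) K (v t) := by
        rw [← map_pow, hr, ZMod.pow_card_pow]
      have e3 : (x ^ (t.2.2.1 + r * t.1.1)) ^ r = x ^ (r * t.2.2.1 + t.1.1) := by
        rw [← pow_mul, pow_add x (r * t.2.2.1)]
        rw [add_mul, pow_add, mul_comm t.2.2.1 r, show r * t.1.1 * r = r ^ 2 * t.1.1 by ring,
          pow_mul x (r^2), hx2]
      rw [← pow_mul (aeval x h), mul_comm t.2.1.1 r, pow_mul (aeval x h), e1, e2, e3]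
    rw [hΦv, map_zero] at key
    exact pow_eq_zero_iff (by positivity) |>.1 key
  have hcard : Z.card ≤ (G.map (algebraMap (ZMod p) K)).natDegree := by
    apply Polynomial.card_le_degree_of_subset_roots
    intro x hx
    rw [Polynomial.mem_roots (Polynomial.map_ne_zero hG0), IsRoot, eval_map_algebraMap]
    exact hroot x hx
  exact hcard.trans (natDegree_map_le.trans hGnat)
end

section
open Polynomial

theorem trace_sum_bound (p : ℕ) [hp : Fact p.Prime] (f : (ZMod p)[X]) (hd1 : 1 ≤ f.natDegree)
    (hdp : f.natDegree < p) (ψ : AddChar (ZMod p) ℂ) (hψ : ψ ≠ 1)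
    (μ : ℕ) (K : Type) [Field K] [Fintype K] [Algebra (ZMod p) K]
    (hK : Module.finrank (ZMod p) K = 2 * (μ + 1)) :
    ‖∑ x : K, ψ (Algebra.trace (ZMod p) K (aeval x f))‖ ≤
      2 * p * (2 * f.natDegree + 3) * (p : ℝ) ^ (μ + 1) := by
  classical
  have hchar : CharP K p := charP_of_injective_algebraMap (algebraMap (ZMod p) K).injective p
  have hcard : Fintype.card K = (p ^ (μ + 1)) ^ 2 := by
    rw [Module.card_eq_pow_finrank (K := ZMod p) (V := K), hK, ZMod.card]; ring
  let Z : ZMod p → Finset K := fun c =>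
    Finset.univ.filter (fun x => Algebra.trace (ZMod p) K (aeval x f) = c)
  have hZ : ∀ c, (Z c).card ≤ p ^ μ * p ^ (μ + 1) + (2 * f.natDegree + 3) * p ^ (μ + 1) := by
    intro c
    refine stepanov_count p f hd1 hdp μ K hcard c (Z c) ?_
    intro x hx
    have hx' : Algebra.trace (ZMod p) K (aeval x f) = c := (Finset.mem_filter.1 hx).2
    rw [← hx', FiniteField.algebraMap_trace_eq_sum_pow, hK, two_mul, Finset.sum_range_add _ (μ + 1) (μ + 1), Nat.card_zmod]
    simp only [map_sum, map_pow]
    rw [sum_pow_char_pow]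
    congr 1
    refine Finset.sum_congr rfl fun i _ => ?_
    rw [← pow_mul, ← pow_add, add_comm]
  have hsum : ∑ c : ZMod p, (Z c).card = p * (p ^ μ * p ^ (μ + 1)) := by
    have := Finset.card_eq_sum_card_fiberwise (s := (Finset.univ : Finset K))
      (t := (Finset.univ : Finset (ZMod p))) (f := fun x => Algebra.trace (ZMod p) K (aeval x f))
      (fun x _ => Finset.mem_coe.2 (Finset.mem_univ _))
    rw [← this, Finset.card_univ, hcard]; ring
  have hS : ∑ x : K, ψ (Algebra.trace (ZMod p) K (aeval x f)) =
      ∑ c : ZMod p, ψ c * (((Z c).card : ℝ) - (p : ℝ) ^ μ * (p : ℝ) ^ (μ + 1) : ℝ) := by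
    have h1 : ∑ x : K, ψ (Algebra.trace (ZMod p) K (aeval x f)) =
        ∑ c : ZMod p, ψ c * (Z c).card := by
      rw [← Finset.sum_fiberwise (s := (Finset.univ : Finset K))
        (g := fun x => Algebra.trace (ZMod p) K (aeval x f))]
      refine Finset.sum_congr rfl fun c _ => ?_
      rw [Finset.sum_congr rfl (g := fun _ => ψ c)]
      · simp [Z, mul_comm]
      · intro x hx
        rw [(Finset.mem_filter.1 hx).2]
    rw [h1]
    have h0 : ∑ c : ZMod p, ψ c = 0 := AddChar.sum_eq_zero_of_ne_one hψ
    push_cast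
    simp only [mul_sub, Finset.sum_sub_distrib, ← Finset.sum_mul, h0]
    simp
  rw [hS]
  refine (norm_sum_le _ _).trans ?_
  have hb : ∀ c : ZMod p, ‖ψ c * (((Z c).card : ℝ) - (p : ℝ) ^ μ * (p : ℝ) ^ (μ + 1) : ℝ)‖ ≤
      2 * ((2 * f.natDegree + 3) * (p : ℝ) ^ (μ + 1)) -
        (((Z c).card : ℝ) - (p : ℝ) ^ μ * (p : ℝ) ^ (μ + 1)) := by
    intro c
    rw [norm_mul, AddChar.norm_apply, one_mul, Complex.norm_real, Real.norm_eq_abs]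
    have := hZ c
    have h2 : ((Z c).card : ℝ) ≤ (p : ℝ) ^ μ * (p : ℝ) ^ (μ + 1) +
      (2 * f.natDegree + 3) * (p : ℝ) ^ (μ + 1) := by exact_mod_cast this
    have h3 : 0 ≤ (2 * f.natDegree + 3) * (p : ℝ) ^ (μ + 1) := by positivity
    rw [abs_le]; constructor <;> linarith
  refine (Finset.sum_le_sum fun c _ => hb c).trans ?_
  have hsum' : ∑ c : ZMod p, ((Z c).card : ℝ) = p * ((p : ℝ) ^ μ * (p : ℝ) ^ (μ + 1)) := by
    exact_mod_cast hsum
  simp only [Finset.sum_sub_distrib, hsum', Finset.sum_const, Finset.card_univ, ZMod.card,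
    nsmul_eq_mul]
  linarith
end

section
open Polynomial

/-- logarithmic derivative series of the reversed polynomial. -/
noncomputable def ldSer {F : Type*} [Field F] (h : F[X]) : PowerSeries F :=
  -(PowerSeries.X * PowerSeries.derivative F (h.reverse : PowerSeries F)) *
    (h.reverse : PowerSeries F)⁻¹

/-- power sums of the roots. -/
noncomputable def pwSum {F : Type*} [Field F] (h : F[X]) (j : ℕ) : F :=
  PowerSeries.coeff j (ldSer h)

theorem rev_const_ne {F : Type*} [Field F] {h : F[X]} (h0 : h ≠ 0) :
    PowerSeries.constantCoeff (h.reverse : PowerSeries F) ≠ 0 := by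
  rw [← PowerSeries.coeff_zero_eq_constantCoeff_apply, Polynomial.coeff_coe, coeff_zero_reverse]
  exact leadingCoeff_ne_zero.2 h0

theorem ldSer_spec {F : Type*} [Field F] {h : F[X]} (h0 : h ≠ 0) (s : PowerSeries F) :
    s = ldSer h ↔ s * (h.reverse : PowerSeries F) =
      -(PowerSeries.X * PowerSeries.derivative F (h.reverse : PowerSeries F)) := by
  rw [ldSer, PowerSeries.eq_mul_inv_iff_mul_eq (rev_const_ne h0)]

theorem ldSer_mul {F : Type*} [Field F] {g h : F[X]} (g0 : g ≠ 0) (h0 : h ≠ 0) :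
    ldSer (g * h) = ldSer g + ldSer h := by
  symm
  rw [ldSer_spec (mul_ne_zero g0 h0)]
  have e1 := (ldSer_spec g0 _).1 rfl
  have e2 := (ldSer_spec h0 _).1 rfl
  rw [reverse_mul_of_domain, Polynomial.coe_mul, Derivation.leibniz, smul_eq_mul, smul_eq_mul]
  linear_combination (h.reverse : PowerSeries F) * e1 + (g.reverse : PowerSeries F) * e2

theorem pwSum_mul {F : Type*} [Field F] {g h : F[X]} (g0 : g ≠ 0) (h0 : h ≠ 0) (j : ℕ) :
    pwSum (g * h) j = pwSum g j + pwSum h j := by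
  rw [pwSum, ldSer_mul g0 h0, map_add]; rfl

theorem pwSum_one {F : Type*} [Field F] (j : ℕ) : pwSum (1 : F[X]) j = 0 := by
  have := pwSum_mul (F := F) one_ne_zero one_ne_zero j
  rw [mul_one] at this
  simpa using this

theorem pwSum_zero_idx {F : Type*} [Field F] (h : F[X]) : pwSum h 0 = 0 := by
  simp [pwSum, ldSer]

theorem ldSer_map {F E : Type*} [Field F] [Field E] (φ : F →+* E) {h : F[X]} (h0 : h ≠ 0) :
    PowerSeries.map φ (ldSer h) = ldSer (h.map φ) := by
  rw [ldSer_spec (Polynomial.map_ne_zero h0)]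
  have e1 := congrArg (PowerSeries.map φ) ((ldSer_spec h0 _).1 rfl)
  have e2 : (h.map φ).reverse = h.reverse.map φ := by
    ext n
    simp [coeff_reverse]
  have e3 : ((h.reverse.map φ : E[X]) : PowerSeries E) = PowerSeries.map φ (h.reverse : PowerSeries F) := by
    ext n; simp
  have e4 : ∀ s : PowerSeries F, PowerSeries.derivative E (PowerSeries.map φ s) =
      PowerSeries.map φ (PowerSeries.derivative F s) := by
    intro s; ext n; simp [PowerSeries.coeff_derivative]
  rw [e2, e3, e4, ← map_mul, e1]
  simp

theorem pwSum_map {F E : Type*} [Field F] [Field E] (φ : F →+* E) {h : F[X]} (h0 : h ≠ 0)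
    (j : ℕ) : pwSum (h.map φ) j = φ (pwSum h j) := by
  rw [pwSum, ← ldSer_map φ h0, PowerSeries.coeff_map]; rfl

theorem pwSum_linear {F : Type*} [Field F] (α : F) (j : ℕ) (hj : j ≠ 0) :
    pwSum (X - C α) j = α ^ j := by
  have h0 : (X - C α : F[X]) ≠ 0 := X_sub_C_ne_zero α
  have hrev : ((X - C α : F[X]).reverse : PowerSeries F) = 1 - PowerSeries.C α * PowerSeries.X := by
    ext n
    rw [Polynomial.coeff_coe, coeff_reverse, natDegree_X_sub_C]
    rcases n with _ | _ | n
    · rw [revAt_le (by omega)]; simp [coeff_X, coeff_C]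
    · rw [revAt_le (by omega)]; simp [PowerSeries.coeff_one, coeff_X, coeff_C]
    · have : revAt 1 (n + 2) = n + 2 := revAt_eq_self_of_lt (by omega)
      rw [this, coeff_sub, coeff_X, coeff_C]
      simp [PowerSeries.coeff_one, PowerSeries.coeff_succ_mul_X, PowerSeries.coeff_C]
  have : PowerSeries.mk (fun j => if j = 0 then 0 else α ^ j) = ldSer (X - C α) := by
    rw [ldSer_spec h0, hrev]
    ext n
    rcases n with _ | n
    · simp
    · rw [mul_sub, mul_one, map_sub, PowerSeries.coeff_mk, mul_left_comm, PowerSeries.coeff_C_mul,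
        PowerSeries.coeff_succ_mul_X, PowerSeries.coeff_mk, map_neg, PowerSeries.coeff_succ_X_mul,
        PowerSeries.coeff_derivative, map_sub]
      rcases n with _ | n
      · simp [PowerSeries.coeff_one]
      · simp [PowerSeries.coeff_one, PowerSeries.coeff_succ_mul_X, PowerSeries.coeff_C, pow_succ]
        ring
  rw [pwSum, ← this, PowerSeries.coeff_mk, if_neg hj]

theorem pwSum_shift {F : Type*} [Field F] {h : F[X]} {d : ℕ} (hm : h.Monic) (hd : 1 ≤ d)
    (hdn : d ≤ h.natDegree) (c : F) :
    (∀ j < d, pwSum (h + C c * X ^ (h.natDegree - d)) j = pwSum h j) ∧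
      pwSum (h + C c * X ^ (h.natDegree - d)) d = pwSum h d - d * c := by
  set k := h + C c * X ^ (h.natDegree - d) with hk
  set n := h.natDegree with hn
  have hlt : (C c * X ^ (n - d)).degree < h.degree := by
    rw [degree_eq_natDegree hm.ne_zero]
    refine (degree_C_mul_X_pow_le _ _).trans_lt ?_
    exact_mod_cast (by omega : n - d < n)
  have hkm : k.Monic := hm.add_of_left hlt
  have hkn : k.natDegree = n := by
    rw [hk]; exact natDegree_add_eq_left_of_degree_lt hlt
  have hrev : (k.reverse : PowerSeries F) =
      (h.reverse : PowerSeries F) + PowerSeries.C c * PowerSeries.X ^ d := by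
    ext m
    rw [Polynomial.coeff_coe, coeff_reverse, hkn, map_add, Polynomial.coeff_coe, coeff_reverse,
      ← hn, hk, coeff_add, PowerSeries.coeff_C_mul, PowerSeries.coeff_X_pow, coeff_C_mul, coeff_X_pow]
    congr 2
    by_cases hmn : m ≤ n
    · rw [revAt_le hmn]
      by_cases hmd : m = d
      · simp [hmd]
      · rw [if_neg (by omega), if_neg hmd]
    · rw [revAt_eq_self_of_lt (by omega), if_neg (by omega), if_neg (by omega)]
  have e1 := (ldSer_spec hm.ne_zero _).1 rfl
  have e2 := (ldSer_spec hkm.ne_zero _).1 rfl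
  set U := (h.reverse : PowerSeries F)
  have hU : PowerSeries.constantCoeff U = 1 := by
    rw [← PowerSeries.coeff_zero_eq_constantCoeff_apply, Polynomial.coeff_coe, coeff_zero_reverse]
    exact hm
  set D := ldSer k - ldSer h with hD
  rw [hrev, map_add] at e2
  have hder : PowerSeries.X * PowerSeries.derivative F (PowerSeries.C c * PowerSeries.X ^ d) =
      PowerSeries.C (d * c) * PowerSeries.X ^ d := by
    obtain ⟨d, rfl⟩ : ∃ d', d = d' + 1 := ⟨d - 1, by omega⟩
    rw [Derivation.leibniz, Derivation.leibniz_pow]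
    simp
    ring
  have key : D * U = PowerSeries.X ^ d * (-PowerSeries.C (d * c) - PowerSeries.C c * ldSer k) := by
    rw [mul_add, mul_add PowerSeries.X, hder] at e2
    rw [hD]
    linear_combination e2 - e1
  have hDeq : D = PowerSeries.X ^ d * ((-PowerSeries.C (d * c) - PowerSeries.C c * ldSer k) * U⁻¹) := by
    rw [← mul_assoc, PowerSeries.eq_mul_inv_iff_mul_eq (by rw [hU]; exact one_ne_zero), key]
  have hco : ∀ j, pwSum k j = pwSum h j + PowerSeries.coeff j D := by
    intro j; rw [hD, map_sub]; simp [pwSum]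
  constructor
  · intro j hj
    rw [hco, hDeq, PowerSeries.coeff_X_pow_mul', if_neg (by omega), add_zero]
  · rw [hco, hDeq, PowerSeries.coeff_X_pow_mul', if_pos le_rfl, Nat.sub_self,
      PowerSeries.coeff_zero_eq_constantCoeff_apply, map_mul, map_sub, map_neg, PowerSeries.constantCoeff_inv, hU, map_mul]
    have : PowerSeries.constantCoeff (ldSer k) = 0 := by
      rw [← PowerSeries.coeff_zero_eq_constantCoeff_apply]; exact pwSum_zero_idx k
    simp [this]
    ring

/-- sum of `f` over the roots of `h` -/
noncomputable def rootSum {F : Type*} [Field F] (f h : F[X]) : F :=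
  ∑ j ∈ Finset.range (f.natDegree + 1), f.coeff j * pwSum h j

theorem rootSum_mul {F : Type*} [Field F] (f : F[X]) {g h : F[X]} (g0 : g ≠ 0) (h0 : h ≠ 0) :
    rootSum f (g * h) = rootSum f g + rootSum f h := by
  simp only [rootSum, pwSum_mul g0 h0, mul_add, Finset.sum_add_distrib]

theorem rootSum_one {F : Type*} [Field F] (f : F[X]) : rootSum f 1 = 0 := by
  simp [rootSum, pwSum_one]

theorem rootSum_pow {F : Type*} [Field F] (f : F[X]) {h : F[X]} (h0 : h ≠ 0) (r : ℕ) :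
    rootSum f (h ^ r) = r * rootSum f h := by
  induction r with
  | zero => simp [rootSum_one]
  | succ r ih => rw [pow_succ, rootSum_mul f (pow_ne_zero _ h0) h0, ih]; push_cast; ring

theorem rootSum_map {F E : Type*} [Field F] [Field E] (φ : F →+* E) (f : F[X]) {h : F[X]}
    (h0 : h ≠ 0) : rootSum (f.map φ) (h.map φ) = φ (rootSum f h) := by
  simp [rootSum, pwSum_map φ h0]

theorem rootSum_linear {F : Type*} [Field F] (f : F[X]) (hf : f.coeff 0 = 0) (α : F) :
    rootSum f (X - C α) = f.eval α := by
  rw [rootSum, eval_eq_sum_range]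
  refine Finset.sum_congr rfl fun j _ => ?_
  rcases eq_or_ne j 0 with rfl | hj
  · simp [hf]
  · rw [pwSum_linear α j hj]

theorem rootSum_prod {F : Type*} [Field F] (f : F[X]) (hf : f.coeff 0 = 0) (s : Multiset F) :
    rootSum f (s.map (fun α => X - C α)).prod = (s.map (fun α => f.eval α)).sum := by
  induction s using Multiset.induction_on with
  | empty => simp [rootSum_one]
  | cons a s ih =>
    rw [Multiset.map_cons, Multiset.prod_cons, rootSum_mul f (X_sub_C_ne_zero a), ih,
      rootSum_linear f hf, Multiset.map_cons, Multiset.sum_cons]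
    exact (monic_multiset_prod_of_monic _ _ (fun α _ => monic_X_sub_C α)).ne_zero

theorem rootSum_shift {F : Type*} [Field F] (f : F[X]) {h : F[X]} (hm : h.Monic)
    (hd : 1 ≤ f.natDegree) (hdn : f.natDegree ≤ h.natDegree) (c : F) :
    rootSum f (h + C c * X ^ (h.natDegree - f.natDegree)) =
      rootSum f h - f.leadingCoeff * (f.natDegree * c) := by
  obtain ⟨h1, h2⟩ := pwSum_shift hm hd hdn c
  rw [rootSum, rootSum, Finset.sum_range_succ, Finset.sum_range_succ, h2,
    Finset.sum_congr rfl (fun j hj => by rw [h1 j (Finset.mem_range.1 hj)])]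
  rw [leadingCoeff]
  ring
end

section
open Polynomial

theorem monicSet_finite (p n : ℕ) [Fact p.Prime] :
    {h : (ZMod p)[X] | h.Monic ∧ h.natDegree = n}.Finite := by
  have : Finite (degreeLT (ZMod p) (n + 1)) :=
    Finite.of_equiv _ (degreeLTEquiv (ZMod p) (n + 1)).symm.toEquiv
  refine Set.Finite.subset (Set.toFinite (degreeLT (ZMod p) (n + 1) : Set (ZMod p)[X])) ?_
  rintro h ⟨hm, hn⟩
  rw [SetLike.mem_coe, mem_degreeLT, degree_eq_natDegree hm.ne_zero, hn]
  exact_mod_cast Nat.lt_succ_self n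

noncomputable def monicSet (p n : ℕ) [Fact p.Prime] : Finset (ZMod p)[X] :=
  (monicSet_finite p n).toFinset

theorem mem_monicSet {p n : ℕ} [Fact p.Prime] {h : (ZMod p)[X]} :
    h ∈ monicSet p n ↔ h.Monic ∧ h.natDegree = n := by
  simp [monicSet]

open scoped Classical in
noncomputable def irrSet (p n : ℕ) [Fact p.Prime] : Finset (ZMod p)[X] :=
  (monicSet p n).filter Irreducible

theorem mem_irrSet {p n : ℕ} [Fact p.Prime] {h : (ZMod p)[X]} :
    h ∈ irrSet p n ↔ (h.Monic ∧ h.natDegree = n) ∧ Irreducible h := by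
  simp [irrSet, mem_monicSet]

noncomputable def lam {p : ℕ} [Fact p.Prime] (ψ : AddChar (ZMod p) ℂ) (f h : (ZMod p)[X]) : ℂ :=
  ψ (rootSum f h)

noncomputable def aSum {p : ℕ} [Fact p.Prime] (ψ : AddChar (ZMod p) ℂ) (f : (ZMod p)[X])
    (n : ℕ) : ℂ := ∑ h ∈ monicSet p n, lam ψ f h

noncomputable def sSum {p : ℕ} [Fact p.Prime] (ψ : AddChar (ZMod p) ℂ) (f : (ZMod p)[X])
    (m : ℕ) : ℂ := ∑ t ∈ m.divisorsAntidiagonal, ∑ P ∈ irrSet p t.1, (t.1 : ℂ) * lam ψ f P ^ t.2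

theorem lam_mul {p : ℕ} [Fact p.Prime] (ψ : AddChar (ZMod p) ℂ) (f : (ZMod p)[X])
    {g h : (ZMod p)[X]} (g0 : g ≠ 0) (h0 : h ≠ 0) :
    lam ψ f (g * h) = lam ψ f g * lam ψ f h := by
  rw [lam, rootSum_mul f g0 h0, AddChar.map_add_eq_mul]; rfl

theorem lam_pow {p : ℕ} [Fact p.Prime] (ψ : AddChar (ZMod p) ℂ) (f : (ZMod p)[X])
    {g : (ZMod p)[X]} (g0 : g ≠ 0) (r : ℕ) :
    lam ψ f (g ^ r) = lam ψ f g ^ r := by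
  induction r with
  | zero => simp [lam, rootSum_one]
  | succ r ih => rw [pow_succ, lam_mul ψ f (pow_ne_zero _ g0) g0, ih, pow_succ]

theorem aSum_zero {p : ℕ} [Fact p.Prime] (ψ : AddChar (ZMod p) ℂ) (f : (ZMod p)[X]) :
    aSum ψ f 0 = 1 := by
  have : monicSet p 0 = {1} := by
    ext h
    rw [mem_monicSet, Finset.mem_singleton]
    constructor
    · rintro ⟨h1, h2⟩; exact h1.natDegree_eq_zero.1 h2
    · rintro rfl; simp
  rw [aSum, this]
  simp [lam, rootSum_one]

theorem aSum_vanish {p : ℕ} [hp : Fact p.Prime] (ψ : AddChar (ZMod p) ℂ) (hψ : ψ ≠ 1)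
    (f : (ZMod p)[X]) (hd1 : 1 ≤ f.natDegree) (hdp : f.natDegree < p) (n : ℕ)
    (hn : f.natDegree ≤ n) : aSum ψ f n = 0 := by
  obtain ⟨b, hb⟩ := AddChar.ne_one_iff.1 hψ
  have hf0 : f.leadingCoeff ≠ 0 := by
    rw [Ne, leadingCoeff_eq_zero]; rintro rfl; simp at hd1
  have hd0 : (f.natDegree : ZMod p) ≠ 0 := by
    rw [Ne, ZMod.natCast_eq_zero_iff]
    intro h
    exact absurd (Nat.le_of_dvd (by omega) h) (by omega)
  set c : ZMod p := -b / (f.leadingCoeff * f.natDegree) with hc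
  have hcb : f.leadingCoeff * (f.natDegree * c) = -b := by
    rw [hc]; field_simp
  have key : ∀ c' : ZMod p, ∀ h ∈ monicSet p n,
      h + C c' * X ^ (n - f.natDegree) ∈ monicSet p n := by
    intro c' h hh
    obtain ⟨h1, h2⟩ := mem_monicSet.1 hh
    have hlt : (C c' * X ^ (n - f.natDegree)).degree < h.degree := by
      rw [degree_eq_natDegree h1.ne_zero, h2]
      refine (degree_C_mul_X_pow_le _ _).trans_lt ?_
      exact_mod_cast (by omega : n - f.natDegree < n)
    exact mem_monicSet.2 ⟨h1.add_of_left hlt, by rw [natDegree_add_eq_left_of_degree_lt hlt, h2]⟩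
  have h1 : aSum ψ f n = ψ b * aSum ψ f n := by
    rw [aSum, Finset.mul_sum]
    symm
    refine Finset.sum_bij' (fun h _ => h + C c * X ^ (n - f.natDegree))
      (fun h _ => h + C (-c) * X ^ (n - f.natDegree)) (key c) (key (-c)) ?_ ?_ ?_
    · intro h _; simp
    · intro h _; simp
    · intro h hh
      obtain ⟨h1, h2⟩ := mem_monicSet.1 hh
      have := rootSum_shift f h1 hd1 (by omega) c
      rw [h2] at this
      rw [lam, lam, this, hcb, sub_neg_eq_add, AddChar.map_add_eq_mul, mul_comm]
  have h2 : (ψ b - 1) * aSum ψ f n = 0 := by linear_combination -h1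
  rcases mul_eq_zero.1 h2 with h | h
  · exact absurd (sub_eq_zero.1 h) hb
  · exact h

theorem degree_formula {p n : ℕ} [Fact p.Prime] {h : (ZMod p)[X]} (hh : h ∈ monicSet p n) :
    open scoped Classical in
    n = ∑ i ∈ Finset.Icc 1 n, ∑ P ∈ irrSet p i, ∑ r ∈ Finset.Icc 1 n,
      if P ^ r ∣ h then i else 0 := by
  classical
  obtain ⟨hm, hn⟩ := mem_monicSet.1 hh
  have hne := hm.ne_zero
  set s := UniqueFactorizationMonoid.normalizedFactors h with hs
  have hsm : ∀ P ∈ s, P.Monic ∧ Irreducible P ∧ P ∣ h := by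
    intro P hP
    have h1 := UniqueFactorizationMonoid.irreducible_of_normalized_factor P hP
    refine ⟨?_, h1, UniqueFactorizationMonoid.dvd_of_mem_normalizedFactors hP⟩
    have h2 := UniqueFactorizationMonoid.normalize_normalized_factor P hP
    rw [← h2]; exact monic_normalize h1.ne_zero
  have hprod : s.prod = h := by
    rw [hs, UniqueFactorizationMonoid.prod_normalizedFactors_eq hne, hm.normalize_eq_self]
  have hdeg : n = ∑ P ∈ s.toFinset, s.count P * P.natDegree := by
    rw [← hn, ← hprod, natDegree_multiset_prod_of_monic _ (fun P hP => (hsm P hP).1),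
      Finset.sum_multiset_map_count]
    simp
  have hcnt : ∀ i ∈ Finset.Icc 1 n, ∀ P ∈ irrSet p i, (∑ r ∈ Finset.Icc 1 n,
      if P ^ r ∣ h then i else 0) = s.count P * P.natDegree := by
    intro i hi P hP
    obtain ⟨⟨h1, h2⟩, h3⟩ := mem_irrSet.1 hP
    rw [← Finset.sum_filter, Finset.sum_const, smul_eq_mul, h2]
    congr 1
    have hc := UniqueFactorizationMonoid.emultiplicity_eq_count_normalizedFactors h3 hne
    rw [h1.normalize_eq_self, ← hs] at hc
    have hiff : ∀ r, P ^ r ∣ h ↔ r ≤ s.count P := by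
      intro r
      rw [pow_dvd_iff_le_emultiplicity, hc, Nat.cast_le]
    have hle : s.count P ≤ n := by
      have := natDegree_le_of_dvd ((hiff (s.count P)).2 le_rfl) hne
      rw [natDegree_pow, h2, hn] at this
      have hi1 := (Finset.mem_Icc.1 hi).1
      nlinarith
    have : (Finset.Icc 1 n).filter (fun r => P ^ r ∣ h) = Finset.Icc 1 (s.count P) := by
      ext r
      simp only [Finset.mem_filter, Finset.mem_Icc, hiff]
      omega
    rw [this]; simp
  rw [Finset.sum_congr rfl (fun i hi => Finset.sum_congr rfl (hcnt i hi))]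
  rw [← Finset.sum_biUnion]
  · conv_lhs => rw [hdeg]
    apply Finset.sum_subset
    · intro P hP
      obtain ⟨h1, h2, h3⟩ := hsm P (Multiset.mem_toFinset.1 hP)
      rw [Finset.mem_biUnion]
      refine ⟨P.natDegree, Finset.mem_Icc.2 ⟨h2.natDegree_pos, ?_⟩, mem_irrSet.2 ⟨⟨h1, rfl⟩, h2⟩⟩
      rw [← hn]; exact natDegree_le_of_dvd h3 hne
    · intro P _ hP
      rw [Multiset.mem_toFinset] at hP
      rw [Multiset.count_eq_zero_of_notMem hP, zero_mul]
  · intro i _ j _ hij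
    rw [Function.onFun, Finset.disjoint_left]
    intro P h1 h2
    exact hij ((mem_irrSet.1 h1).1.2.symm.trans (mem_irrSet.1 h2).1.2)

theorem sum_dvd {p : ℕ} [Fact p.Prime] (ψ : AddChar (ZMod p) ℂ) (f : (ZMod p)[X]) (n i r : ℕ)
    {P : (ZMod p)[X]} (hP : P ∈ irrSet p i) :
    open scoped Classical in
    ∑ h ∈ (monicSet p n).filter (fun h => P ^ r ∣ h), lam ψ f h =
      if i * r ≤ n then lam ψ f P ^ r * aSum ψ f (n - i * r) else 0 := by
  classical
  obtain ⟨⟨h1, h2⟩, h3⟩ := mem_irrSet.1 hP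
  have hPr : (P ^ r).Monic := h1.pow r
  have hPd : (P ^ r).natDegree = i * r := by rw [natDegree_pow, h2, mul_comm]
  split_ifs with hir
  · rw [aSum, Finset.mul_sum]
    symm
    refine Finset.sum_bij (fun h _ => P ^ r * h) ?_ ?_ ?_ ?_
    · intro h hh
      obtain ⟨a, b⟩ := mem_monicSet.1 hh
      rw [Finset.mem_filter, mem_monicSet]
      refine ⟨⟨hPr.mul a, ?_⟩, dvd_mul_right _ _⟩
      rw [hPr.natDegree_mul a, hPd, b]; omega
    · intro a _ b _ hab
      exact mul_left_cancel₀ hPr.ne_zero hab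
    · intro h hh
      rw [Finset.mem_filter, mem_monicSet] at hh
      obtain ⟨⟨a, b⟩, k, rfl⟩ := hh
      have hk := hPr.of_mul_monic_left a
      refine ⟨k, mem_monicSet.2 ⟨hk, ?_⟩, rfl⟩
      rw [hPr.natDegree_mul hk, hPd] at b; omega
    · intro h hh
      rw [lam_mul ψ f hPr.ne_zero (mem_monicSet.1 hh).1.ne_zero, lam_pow ψ f h1.ne_zero]
  · apply Finset.sum_eq_zero
    intro h hh
    rw [Finset.mem_filter, mem_monicSet] at hh
    have := natDegree_le_of_dvd hh.2 hh.1.1.ne_zero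
    omega

theorem lfun_rec {p : ℕ} [Fact p.Prime] (ψ : AddChar (ZMod p) ℂ) (f : (ZMod p)[X]) (n : ℕ) :
    (n : ℂ) * aSum ψ f n = ∑ m ∈ Finset.Icc 1 n, sSum ψ f m * aSum ψ f (n - m) := by
  classical
  have h1 : (n : ℂ) * aSum ψ f n = ∑ i ∈ Finset.Icc 1 n, ∑ r ∈ Finset.Icc 1 n,
      ∑ P ∈ irrSet p i, if i * r ≤ n then i * (lam ψ f P ^ r * aSum ψ f (n - i * r)) else 0 := by
    rw [aSum, Finset.mul_sum]
    have : ∀ h ∈ monicSet p n, (n : ℂ) * lam ψ f h = ∑ i ∈ Finset.Icc 1 n, ∑ r ∈ Finset.Icc 1 n,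
        ∑ P ∈ irrSet p i, if P ^ r ∣ h then i * lam ψ f h else 0 := by
      intro h hh
      have e := congrArg (Nat.cast (R := ℂ)) (degree_formula hh)
      conv_lhs => rw [e]
      push_cast
      rw [Finset.sum_mul]
      refine Finset.sum_congr rfl fun i _ => ?_
      rw [Finset.sum_comm, Finset.sum_mul]
      refine Finset.sum_congr rfl fun r _ => ?_
      rw [Finset.sum_mul]
      refine Finset.sum_congr rfl fun P _ => ?_
      split_ifs <;> simp
    rw [Finset.sum_congr rfl this, Finset.sum_comm]
    refine Finset.sum_congr rfl fun i _ => ?_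
    rw [Finset.sum_comm]
    refine Finset.sum_congr rfl fun r _ => ?_
    rw [Finset.sum_comm]
    refine Finset.sum_congr rfl fun P hP => ?_
    rw [← Finset.sum_filter, ← Finset.mul_sum, sum_dvd ψ f n i r hP]
    split_ifs <;> simp
  rw [h1]
  have h2 : ∀ m ∈ Finset.Icc 1 n, sSum ψ f m * aSum ψ f (n - m) =
      ∑ t ∈ (Finset.Icc 1 n ×ˢ Finset.Icc 1 n).filter (fun t => t.1 * t.2 = m),
        ∑ P ∈ irrSet p t.1, if t.1 * t.2 ≤ n then
          t.1 * (lam ψ f P ^ t.2 * aSum ψ f (n - t.1 * t.2)) else 0 := by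
    intro m hm
    rw [Finset.mem_Icc] at hm
    rw [sSum, Finset.sum_mul]
    have : m.divisorsAntidiagonal =
        (Finset.Icc 1 n ×ˢ Finset.Icc 1 n).filter (fun t => t.1 * t.2 = m) := by
      ext ⟨a, b⟩
      simp only [Nat.mem_divisorsAntidiagonal, Finset.mem_filter, Finset.mem_product,
        Finset.mem_Icc]
      constructor
      · rintro ⟨h, h0⟩
        have ha : 0 < a := Nat.pos_of_ne_zero (by rintro rfl; simp at h; omega)
        have hb : 0 < b := Nat.pos_of_ne_zero (by rintro rfl; simp at h; omega)
        have := Nat.le_mul_of_pos_right a hb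
        have := Nat.le_mul_of_pos_left b ha
        refine ⟨⟨⟨ha, by omega⟩, hb, by omega⟩, h⟩
      · rintro ⟨_, h⟩
        exact ⟨h, by omega⟩
    rw [this]
    refine Finset.sum_congr rfl fun t ht => ?_
    have ht' := (Finset.mem_filter.1 ht).2
    rw [Finset.sum_mul]
    refine Finset.sum_congr rfl fun P _ => ?_
    rw [ht', if_pos hm.2]; ring
  rw [Finset.sum_congr rfl h2, ← Finset.sum_product']
  have h3 : ∀ t ∈ Finset.Icc 1 n ×ˢ Finset.Icc 1 n, t ∉ (Finset.Icc 1 n ×ˢ Finset.Icc 1 n).filter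
      (fun t => t.1 * t.2 ≤ n) → (∑ P ∈ irrSet p t.1, if t.1 * t.2 ≤ n then
          (t.1 : ℂ) * (lam ψ f P ^ t.2 * aSum ψ f (n - t.1 * t.2)) else 0) = 0 := by
    intro t ht ht'
    apply Finset.sum_eq_zero
    intro P _
    rw [if_neg]
    intro h; exact ht' (Finset.mem_filter.2 ⟨ht, h⟩)
  rw [← Finset.sum_subset (Finset.filter_subset _ _) h3]
  rw [← Finset.sum_fiberwise_of_maps_to (t := Finset.Icc 1 n) (g := fun t : ℕ × ℕ => t.1 * t.2)]
  · refine Finset.sum_congr rfl fun m hm => ?_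
    rw [Finset.filter_filter]
    refine Finset.sum_congr ?_ fun _ _ => rfl
    ext t
    simp only [Finset.mem_filter, Finset.mem_Icc] at hm ⊢
    constructor
    · rintro ⟨a, b, c⟩; exact ⟨a, c⟩
    · rintro ⟨a, c⟩; exact ⟨a, by omega, c⟩
  · intro t ht
    simp only [Finset.mem_filter, Finset.mem_product, Finset.mem_Icc] at ht ⊢
    exact ⟨Nat.mul_pos ht.1.1.1 ht.1.2.1, ht.2⟩
end

section
open Polynomial IntermediateField

theorem trace_eq_rootSum {p : ℕ} [Fact p.Prime] (f : (ZMod p)[X]) (hf : f.coeff 0 = 0)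
    (K : Type) [Field K] [Fintype K] [Algebra (ZMod p) K] (x : K) :
    Algebra.trace (ZMod p) K (aeval x f) =
      ((Module.finrank (ZMod p) K / (minpoly (ZMod p) x).natDegree : ℕ) : ZMod p) *
        rootSum f (minpoly (ZMod p) x) := by
  classical
  have hint : IsIntegral (ZMod p) x := .of_finite _ x
  let L := (ZMod p)⟮x⟯
  let pb : PowerBasis (ZMod p) L := adjoin.powerBasis hint
  have hgen : pb.gen = AdjoinSimple.gen (ZMod p) x := adjoin.powerBasis_gen hint
  have hmin : minpoly (ZMod p) pb.gen = minpoly (ZMod p) x := by rw [hgen, minpoly_gen]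
  have hfin : Module.finrank L K = Module.finrank (ZMod p) K / (minpoly (ZMod p) x).natDegree := by
    rw [← Module.finrank_mul_finrank (ZMod p) L K, adjoin.finrank hint,
      Nat.mul_div_cancel_left _ (minpoly.natDegree_pos hint)]
  have h1 : algebraMap L K (aeval pb.gen f) = aeval x f := by
    rw [← aeval_algebraMap_apply, hgen, AdjoinSimple.algebraMap_gen]
  rw [← h1, ← Algebra.trace_trace (S := L), Algebra.trace_algebraMap, LinearMap.map_smul_of_tower,
    hfin, nsmul_eq_mul]
  congr 1
  have hnorm : Normal (ZMod p) K := inferInstance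
  have hE : ((minpoly (ZMod p) x).map (algebraMap (ZMod p) (AlgebraicClosure K))).Splits :=
    IsAlgClosed.splits _
  apply (algebraMap (ZMod p) (AlgebraicClosure K)).injective
  rw [trace_eq_sum_embeddings (AlgebraicClosure K)]
  have hmonic : (minpoly (ZMod p) x).Monic := minpoly.monic hint
  rw [← rootSum_map _ f hmonic.ne_zero]
  conv_rhs => rw [hE.eq_prod_roots_of_monic (hmonic.map _)]
  rw [rootSum_prod _ (by simp [hf])]
  letI : Fintype (L →ₐ[ZMod p] AlgebraicClosure K) := PowerBasis.AlgHom.fintype pb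
  have hsep : (minpoly (ZMod p) x).Separable := Algebra.IsSeparable.isSeparable (ZMod p) x
  have h2 : ∀ σ : L →ₐ[ZMod p] AlgebraicClosure K, σ (aeval pb.gen f) =
      (f.map (algebraMap (ZMod p) (AlgebraicClosure K))).eval (pb.liftEquiv' σ).1 := by
    intro σ
    rw [PowerBasis.liftEquiv'_apply_coe, eval_map_algebraMap, aeval_algHom_apply]
  have h3 : ∑ σ : L →ₐ[ZMod p] AlgebraicClosure K, σ (aeval pb.gen f) =
      ∑ y : {y : AlgebraicClosure K // y ∈ (minpoly (ZMod p) pb.gen).aroots (AlgebraicClosure K)},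
        (f.map (algebraMap (ZMod p) (AlgebraicClosure K))).eval y.1 :=
    Fintype.sum_equiv pb.liftEquiv' _ _ h2
  convert h3 using 1
  · congr!
  · rw [Finset.sum_mem_multiset (f := fun y => (f.map (algebraMap (ZMod p) (AlgebraicClosure K))).eval y.1) (g := fun y => (f.map (algebraMap (ZMod p) (AlgebraicClosure K))).eval y),
      Finset.sum_eq_multiset_sum, Multiset.toFinset_val, Multiset.dedup_eq_self.mpr, hmin]
    · exact nodup_roots ((separable_map _).mpr (by rw [hmin]; exact hsep))
    · intro _; rfl

theorem sSum_eq_trace {p : ℕ} [hp : Fact p.Prime] (ψ : AddChar (ZMod p) ℂ) (f : (ZMod p)[X])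
    (hf : f.coeff 0 = 0)
    (K : Type) [Field K] [Fintype K] [Algebra (ZMod p) K] :
    sSum ψ f (Module.finrank (ZMod p) K) = ∑ x : K, ψ (Algebra.trace (ZMod p) K (aeval x f)) := by
  classical
  set m := Module.finrank (ZMod p) K with hm
  have hm0 : m ≠ 0 := Module.finrank_pos.ne'
  have hcard : Fintype.card K = p ^ m := by
    rw [Module.card_eq_pow_finrank (K := ZMod p) (V := K), ZMod.card]
  rw [sSum, Nat.sum_divisorsAntidiagonal (f := fun i r => ∑ P ∈ irrSet p i, (i : ℂ) * lam ψ f P ^ r)]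
  have hdis : ∀ i ∈ m.divisors, ∀ P ∈ irrSet p i, (i : ℂ) * lam ψ f P ^ (m / i) =
      (P.natDegree : ℂ) * lam ψ f P ^ (m / P.natDegree) := by
    intro i _ P hP
    rw [(mem_irrSet.1 hP).1.2]
  rw [Finset.sum_congr rfl (fun i hi => Finset.sum_congr rfl (hdis i hi)), ← Finset.sum_biUnion]
  · rw [← Finset.sum_fiberwise_of_maps_to (t := m.divisors.biUnion (fun i => irrSet p i))
      (g := fun x : K => minpoly (ZMod p) x)]
    · refine Finset.sum_congr rfl fun P hP => ?_
      obtain ⟨i, hi, hP⟩ := Finset.mem_biUnion.1 hP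
      obtain ⟨⟨h1, h2⟩, h3⟩ := mem_irrSet.1 hP
      have hdvd : P ∣ X ^ p ^ m - X := by
        have := (h3.natDegree_dvd_iff_dvd_X_pow_card_pow_sub_X (n := m)).1
          (by rw [h2]; exact Nat.dvd_of_mem_divisors hi)
        rwa [Nat.card_zmod] at this
      have hsplit : (P.map (algebraMap (ZMod p) K)).Splits := by
        have h4 := FiniteField.splits_X_pow_card_sub_X (K := K) p
        rw [hcard] at h4
        have h5 : ((X ^ p ^ m - X : (ZMod p)[X]).map (algebraMap (ZMod p) K)) ≠ 0 := by
          apply Polynomial.map_ne_zero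
          exact FiniteField.X_pow_card_pow_sub_X_ne_zero _ hm0 hp.out.one_lt
        exact Splits.of_dvd h4 h5 (Polynomial.map_dvd _ hdvd)
      have hset : (Finset.univ.filter fun x : K => minpoly (ZMod p) x = P) =
          (P.aroots K).toFinset := by
        ext x
        rw [Finset.mem_filter, Multiset.mem_toFinset, mem_aroots]
        constructor
        · rintro ⟨_, rfl⟩; exact ⟨h1.ne_zero, minpoly.aeval _ x⟩
        · rintro ⟨_, h⟩; exact ⟨Finset.mem_univ _, (minpoly.eq_of_irreducible_of_monic h3 h h1).symm⟩
      have hcardset : (Finset.univ.filter fun x : K => minpoly (ZMod p) x = P).card =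
          P.natDegree := by
        rw [hset, Multiset.toFinset_card_of_nodup, ← hsplit.natDegree_eq_card_roots, natDegree_map]
        exact nodup_roots ((separable_map _).mpr (PerfectField.separable_of_irreducible h3))
      rw [Finset.sum_congr rfl (g := fun _ => lam ψ f P ^ (m / P.natDegree)), Finset.sum_const,
        hcardset, nsmul_eq_mul]
      intro x hx
      have hx' := (Finset.mem_filter.1 hx).2
      rw [trace_eq_rootSum f hf, hx', ← nsmul_eq_mul, AddChar.map_nsmul_eq_pow]
      rfl
    · intro x _
      have hint : IsIntegral (ZMod p) x := .of_finite _ x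
      rw [Finset.mem_biUnion]
      exact ⟨(minpoly (ZMod p) x).natDegree, Nat.mem_divisors.2 ⟨minpoly.degree_dvd hint, hm0⟩,
        mem_irrSet.2 ⟨⟨minpoly.monic hint, rfl⟩, minpoly.irreducible hint⟩⟩
  · intro i _ j _ hij
    rw [Function.onFun, Finset.disjoint_left]
    intro P h1 h2
    exact hij ((mem_irrSet.1 h1).1.2.symm.trans (mem_irrSet.1 h2).1.2)
end

section
open Polynomial

theorem poly_no_root (E : ℂ[X]) (hE : E.eval 0 ≠ 0) (R B : ℝ)
    (h : ∀ z : ℂ, ‖z‖ < R → ‖z * E.derivative.eval z‖ ≤ B * ‖E.eval z‖) (ρ : ℂ) (hρ : ‖ρ‖ < R) :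
    E.eval ρ ≠ 0 := by
  intro h0
  have hE0 : E ≠ 0 := by rintro rfl; simp at hE
  have hρ0 : ρ ≠ 0 := by rintro rfl; exact hE h0
  obtain ⟨Q, hQ, hQn⟩ := exists_eq_pow_rootMultiplicity_mul_and_not_dvd E hE0 ρ
  have hk : 0 < rootMultiplicity ρ E := (rootMultiplicity_pos hE0).2 h0
  obtain ⟨k, hk⟩ : ∃ k, rootMultiplicity ρ E = k + 1 := ⟨_, (Nat.succ_pred_eq_of_pos hk).symm⟩
  rw [hk] at hQ
  have hQρ : Q.eval ρ ≠ 0 := fun h => hQn (dvd_iff_isRoot.2 h)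
  have key : ∀ z : ℂ, ‖z‖ < R → z ≠ ρ →
      ‖z * ((k + 1) * Q.eval z + (z - ρ) * Q.derivative.eval z)‖ ≤ B * ‖(z - ρ) * Q.eval z‖ := by
    intro z hz hne
    have h1 := h z hz
    have e1 : z * E.derivative.eval z = (z - ρ) ^ k *
        (z * ((k + 1) * Q.eval z + (z - ρ) * Q.derivative.eval z)) := by
      rw [hQ]; simp [derivative_mul, derivative_pow]; ring
    have e2 : E.eval z = (z - ρ) ^ k * ((z - ρ) * Q.eval z) := by
      rw [hQ]; simp; ring
    rw [e1, e2, norm_mul, norm_mul _ ((z - ρ) * Q.eval z)] at h1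
    have hpos : 0 < ‖(z - ρ) ^ k‖ := norm_pos_iff.2 (pow_ne_zero _ (sub_ne_zero.2 hne))
    nlinarith
  have hc1 : Continuous fun z : ℂ => ‖z * ((k + 1) * Q.eval z + (z - ρ) * Q.derivative.eval z)‖ := by
    have := Q.continuous
    have := Q.derivative.continuous
    fun_prop
  have hc2 : Continuous fun z : ℂ => B * ‖(z - ρ) * Q.eval z‖ := by
    have := Q.continuous
    fun_prop
  have := le_of_tendsto_of_tendsto (b := nhdsWithin ρ {ρ}ᶜ)
    (hc1.continuousAt.tendsto.mono_left nhdsWithin_le_nhds)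
    (hc2.continuousAt.tendsto.mono_left nhdsWithin_le_nhds) (by
      have h1 : ∀ᶠ z in nhds ρ, ‖z‖ < R :=
        (continuous_norm.tendsto ρ).eventually (gt_mem_nhds hρ)
      filter_upwards [self_mem_nhdsWithin, nhdsWithin_le_nhds h1] with z hz1 hz2
      exact key z hz2 hz1)
  rw [sub_self, zero_mul, zero_mul, norm_zero, mul_zero, add_zero, norm_le_zero_iff] at this
  have hk1 : (k + 1 : ℂ) ≠ 0 := by norm_cast
  exact mul_ne_zero hρ0 (mul_ne_zero hk1 hQρ) this

theorem eval_bound (E : ℂ[X]) (t : ℕ → ℂ) (R : ℝ) (hR : 0 ≤ R)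
    (ht : Summable fun n => ‖t n‖ * R ^ n)
    (h : ∀ n : ℕ, (n : ℂ) * E.coeff n = ∑ x ∈ Finset.HasAntidiagonal.antidiagonal n, t x.1 * E.coeff x.2) (z : ℂ)
    (hz : ‖z‖ < R) : ‖z * E.derivative.eval z‖ ≤ (∑' n, ‖t n‖ * R ^ n) * ‖E.eval z‖ := by
  have hst : Summable fun n => ‖t n * z ^ n‖ := by
    refine Summable.of_nonneg_of_le (fun _ => norm_nonneg _) (fun n => ?_) ht
    rw [norm_mul, norm_pow]; gcongr
  have hsE : ∀ n ∉ Finset.range (E.natDegree + 1), E.coeff n = 0 := fun n hn =>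
    coeff_eq_zero_of_natDegree_lt (by simpa using hn)
  have hE : Summable fun n => ‖E.coeff n * z ^ n‖ :=
    summable_of_ne_finset_zero (s := Finset.range (E.natDegree + 1)) (fun n hn => by simp [hsE n hn])
  have e1 : E.eval z = ∑' n, E.coeff n * z ^ n := by
    rw [tsum_eq_sum (s := Finset.range (E.natDegree + 1)) (fun n hn => by simp [hsE n hn]),
      eval_eq_sum_range]
  have e2 : z * E.derivative.eval z = ∑' n, (n * E.coeff n) * z ^ n := by
    have : z * E.derivative.eval z = (X * E.derivative).eval z := by simp
    rw [this, tsum_eq_sum (s := Finset.range (E.natDegree + 1)) (fun n hn => by simp [hsE n hn]),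
      eval_eq_sum_range' (n := E.natDegree + 1)]
    · refine Finset.sum_congr rfl fun n _ => ?_
      rcases n with _ | n
      · simp
      · rw [coeff_X_mul, coeff_derivative]; push_cast; ring
    · rcases Nat.eq_zero_or_pos E.natDegree with h0 | h0
      · rw [derivative_of_natDegree_zero h0]; simp
      · refine lt_of_le_of_lt natDegree_mul_le ?_
        have := natDegree_derivative_le E
        have := natDegree_X_le (R := ℂ)
        omega
  have e3 : z * E.derivative.eval z = (∑' n, t n * z ^ n) * E.eval z := by
    rw [e2, e1, tsum_mul_tsum_eq_tsum_sum_antidiagonal_of_summable_norm hst hE]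
    refine tsum_congr fun n => ?_
    rw [h, Finset.sum_mul]
    refine Finset.sum_congr rfl fun x hx => ?_
    rw [← Finset.HasAntidiagonal.mem_antidiagonal.1 hx, pow_add]; ring
  rw [e3, norm_mul]
  gcongr
  refine (norm_tsum_le_tsum_norm hst).trans (hst.tsum_le_tsum (fun n => ?_) ht)
  rw [norm_mul, norm_pow]; gcongr


theorem ps_log (L : ℂ[X]) (s : ℕ → ℂ) (hs : s 0 = 0)
    (hr : ∀ n : ℕ, (n : ℂ) * L.coeff n = ∑ m ∈ Finset.Icc 1 n, s m * L.coeff (n - m)) :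
    ((X * L.derivative : ℂ[X]) : PowerSeries ℂ) = PowerSeries.mk s * (L : PowerSeries ℂ) := by
  ext n
  rw [PowerSeries.coeff_mul, Polynomial.coeff_coe]
  simp only [PowerSeries.coeff_mk, Polynomial.coeff_coe]
  rw [Finset.Nat.sum_antidiagonal_eq_sum_range_succ (fun i j => s i * L.coeff j), Finset.range_eq_Ico,
    Finset.sum_eq_sum_Ico_succ_bot (by omega), hs, zero_mul, zero_add]
  have := hr n
  rw [show Finset.Icc 1 n = Finset.Ico (0+1) (n+1) by ext; simp] at this
  rw [← this]
  rcases n with _ | n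
  · simp
  · rw [coeff_X_mul, coeff_derivative]; push_cast; ring

theorem coeff_mkP (a : ℕ → ℂ) (d : ℕ) (ha : ∀ n, d ≤ n → a n = 0) (n : ℕ) :
    (∑ i ∈ Finset.range d, monomial i (a i) : ℂ[X]).coeff n = a n := by
  simp only [finsetSum_coeff, coeff_monomial, Finset.sum_ite_eq', Finset.mem_range]
  split_ifs with h
  · rfl
  · exact (ha n (by omega)).symm

theorem analytic_core (a s : ℕ → ℂ) (d : ℕ) (ha0 : a 0 = 1) (ha : ∀ n, d ≤ n → a n = 0)
    (hs : s 0 = 0)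
    (hr : ∀ n : ℕ, (n : ℂ) * a n = ∑ m ∈ Finset.Icc 1 n, s m * a (n - m))
    (M r : ℝ) (hr0 : 0 < r) (hM : ∀ m, ‖s (2 * m)‖ ≤ M * r ^ (2 * m)) : ‖a 1‖ ≤ d * r := by
  have hM0 : 0 ≤ M := by simpa [hs] using hM 0
  set L : ℂ[X] := ∑ i ∈ Finset.range d, monomial i (a i) with hL
  set N : ℂ[X] := ∑ i ∈ Finset.range d, monomial i ((-1) ^ i * a i) with hN
  have hLc : ∀ n, L.coeff n = a n := coeff_mkP a d ha
  have hNc : ∀ n, N.coeff n = (-1) ^ n * a n :=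
    coeff_mkP (fun i => (-1) ^ i * a i) d (fun n hn => by simp [ha n hn])
  have h1 := ps_log L s hs (by simpa only [hLc] using hr)
  have h2 := ps_log N (fun n => (-1) ^ n * s n) (by simp [hs]) (by
    intro n
    simp only [hNc]
    rw [mul_left_comm, hr, Finset.mul_sum]
    refine Finset.sum_congr rfl fun m hm => ?_
    have : n = m + (n - m) := by have := Finset.mem_Icc.1 hm; omega
    conv_lhs => rw [show (-1 : ℂ) ^ n = (-1) ^ m * (-1) ^ (n - m) by rw [← pow_add, ← this]]
    ring)
  set t : ℕ → ℂ := fun n => s n + (-1) ^ n * s n with ht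
  have h3 : ((X * (L * N).derivative : ℂ[X]) : PowerSeries ℂ) =
      PowerSeries.mk t * ((L * N : ℂ[X]) : PowerSeries ℂ) := by
    have e1 : X * (L * N).derivative = (X * L.derivative) * N + L * (X * N.derivative) := by
      rw [derivative_mul]; ring
    have e2 : PowerSeries.mk t = PowerSeries.mk s + PowerSeries.mk (fun n => (-1) ^ n * s n) := by
      ext n; simp [ht]
    rw [e1, e2, Polynomial.coe_add, Polynomial.coe_mul _ N, h1, Polynomial.coe_mul L, h2,
      Polynomial.coe_mul]
    ring
  have h4 : ∀ n : ℕ, (n : ℂ) * (L * N).coeff n =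
      ∑ x ∈ Finset.HasAntidiagonal.antidiagonal n, t x.1 * (L * N).coeff x.2 := by
    intro n
    have := congrArg (PowerSeries.coeff n) h3
    rw [PowerSeries.coeff_mul, Polynomial.coeff_coe] at this
    simp only [PowerSeries.coeff_mk, Polynomial.coeff_coe] at this
    rw [← this]
    rcases n with _ | n
    · simp
    · rw [coeff_X_mul, coeff_derivative]; push_cast; ring
  have htb : ∀ n, ‖t n‖ ≤ 2 * M * r ^ n := by
    intro n
    rcases Nat.even_or_odd' n with ⟨m, rfl | rfl⟩
    · have := hM m
      simp only [ht, pow_mul, neg_one_sq, one_pow, one_mul, ← two_mul, norm_mul] at *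
      norm_num
      linarith
    · have : t (2 * m + 1) = 0 := by simp [ht, pow_succ, pow_mul]
      rw [this, norm_zero]; positivity
  have hroot : ∀ ρ : ℂ, L.eval ρ = 0 → 1 / r ≤ ‖ρ‖ := by
    intro ρ hρ
    by_contra! hlt
    obtain ⟨R, hR1, hR2⟩ := exists_between hlt
    have hR0 : 0 ≤ R := (norm_nonneg _).trans hR1.le
    have hsum : Summable fun n => ‖t n‖ * R ^ n := by
      refine Summable.of_nonneg_of_le (fun n => by positivity) (fun n => ?_)
        ((summable_geometric_of_lt_one (r := r * R) (by positivity) ?_).mul_left (2 * M))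
      · rw [mul_pow, ← mul_assoc]
        exact mul_le_mul_of_nonneg_right (htb n) (by positivity)
      · rw [lt_div_iff₀ hr0] at hR2; linarith
    refine poly_no_root (L * N) ?_ R _ (eval_bound (L * N) t R hR0 hsum h4) ρ hR1 ?_
    · rw [← coeff_zero_eq_eval_zero, mul_coeff_zero, hLc, hNc, ha0]; simp
    · rw [eval_mul, hρ, zero_mul]
  have hL0 : L.coeff 0 = 1 := by rw [hLc, ha0]
  have hLd : L.natDegree ≤ d := by
    rw [natDegree_le_iff_coeff_eq_zero]
    intro n hn
    rw [hLc, ha n (by omega)]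
  have htr : L.natTrailingDegree = 0 := by
    rw [natTrailingDegree_eq_zero]; right; rw [hL0]; exact one_ne_zero
  rcases Nat.eq_zero_or_pos L.natDegree with h0 | h0
  · have : a 1 = 0 := by rw [← hLc]; exact coeff_eq_zero_of_natDegree_lt (by omega)
    rw [this, norm_zero]; positivity
  have hrd : L.reverse.natDegree = L.natDegree := by
    rw [reverse_natDegree, htr, Nat.sub_zero]
  have hmonic : L.reverse.Monic := by
    rw [Monic, reverse_leadingCoeff, trailingCoeff, htr, hL0]
  have hb := coeff_le_of_roots_le (f := RingHom.id ℂ) (p := L.reverse) (B := r) (L.natDegree - 1)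
    hmonic (IsAlgClosed.splits _) (by
      intro w hw
      rw [Polynomial.map_id, mem_roots hmonic.ne_zero] at hw
      by_cases hw0 : w = 0
      · rw [hw0, norm_zero]; exact hr0.le
      have hi : Invertible w⁻¹ := invertibleOfNonzero (inv_ne_zero hw0)
      have := (eval₂_reverse_eq_zero_iff (RingHom.id ℂ) w⁻¹ L).1 (by
        rw [invOf_eq_inv, inv_inv, eval₂_id]; exact hw)
      have h5 := hroot _ this
      rw [norm_inv, one_div] at h5
      exact (inv_le_inv₀ hr0 (norm_pos_iff.2 hw0)).1 h5)
  rw [Polynomial.map_id, hrd, coeff_reverse, revAt_le (by omega),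
    show L.natDegree - (L.natDegree - 1) = 1 by omega, hLc, pow_one] at hb
  refine hb.trans ?_
  rw [mul_comm, Nat.choose_symm_of_eq_add (b := 1) (by omega), Nat.choose_one_right]
  gcongr

theorem weil_zero (p : ℕ) [hp : Fact p.Prime] (f : (ZMod p)[X]) (hd1 : 1 ≤ f.natDegree)
    (hdp : f.natDegree < p) (ψ : AddChar (ZMod p) ℂ) (hψ : ψ ≠ 1) (hf : f.coeff 0 = 0) :
    ‖∑ x : ZMod p, ψ (f.eval x)‖ ≤ f.natDegree * √p := by
  have hp0 : (0 : ℝ) < p := by exact_mod_cast hp.out.pos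
  have h1 : sSum ψ f 1 = ∑ x : ZMod p, ψ (f.eval x) := by
    have := sSum_eq_trace ψ f hf (ZMod p)
    rw [Module.finrank_self] at this
    rw [this]
    refine Finset.sum_congr rfl fun x _ => ?_
    rw [Algebra.trace_self_apply, coe_aeval_eq_eval]
  have h2 : aSum ψ f 1 = sSum ψ f 1 := by
    have := lfun_rec ψ f 1
    simpa [aSum_zero] using this
  rw [← h1, ← h2]
  refine analytic_core (aSum ψ f) (fun n => if n = 0 then 0 else sSum ψ f n) f.natDegree
    (aSum_zero ψ f) (fun n hn => aSum_vanish ψ hψ f hd1 hdp n hn) (by simp) ?_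
    (2 * p * (2 * f.natDegree + 3)) (√p) (Real.sqrt_pos.2 hp0) ?_
  · intro n
    rw [lfun_rec]
    refine Finset.sum_congr rfl fun m hm => ?_
    rw [if_neg (by have := Finset.mem_Icc.1 hm; omega)]
  · intro m
    rcases m with _ | m
    · simp; positivity
    · rw [if_neg (by omega)]
      have hne : 2 * (m + 1) ≠ 0 := by omega
      have hfr : Module.finrank (ZMod p) (GaloisField p (2 * (m + 1))) = 2 * (m + 1) :=
        GaloisField.finrank p hne
      have : Fintype (GaloisField p (2 * (m + 1))) := Fintype.ofFinite _
      have h5 := sSum_eq_trace ψ f hf (GaloisField p (2 * (m + 1)))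
      rw [hfr] at h5
      rw [h5, pow_mul, Real.sq_sqrt hp0.le]
      exact trace_sum_bound p f hd1 hdp ψ hψ m _ hfr

theorem weil_bound (p : ℕ) [hp : Fact p.Prime] (f : (ZMod p)[X]) (hd1 : 1 ≤ f.natDegree)
    (hdp : f.natDegree < p) (ψ : AddChar (ZMod p) ℂ) (hψ : ψ ≠ 1) :
    ‖∑ x : ZMod p, ψ (f.eval x)‖ ≤ f.natDegree * √p := by
  have hd : (f - C (f.coeff 0)).natDegree = f.natDegree := natDegree_sub_C
  have h := weil_zero p (f - C (f.coeff 0)) (by omega) (by omega) ψ hψ (by simp)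
  rw [hd] at h
  have e1 : ∑ x : ZMod p, ψ (f.eval x) =
      ψ (f.coeff 0) * ∑ x : ZMod p, ψ ((f - C (f.coeff 0)).eval x) := by
    rw [Finset.mul_sum]
    refine Finset.sum_congr rfl fun x _ => ?_
    rw [← AddChar.map_add_eq_mul]; simp
  rw [e1, norm_mul, AddChar.norm_apply, one_mul]
  exact h
end

section
open Polynomial

noncomputable def ex (N : ℕ) (n : ℤ) : ℂ := Complex.exp (2 * Real.pi * Complex.I * n / N)

theorem ex_add (N : ℕ) (m n : ℤ) : ex N (m + n) = ex N m * ex N n := by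
  rw [ex, ex, ex, ← Complex.exp_add]; congr 1; push_cast; ring

theorem ex_norm (N : ℕ) (n : ℤ) : ‖ex N n‖ = 1 := by
  rw [ex, show 2 * Real.pi * Complex.I * n / N = ((2 * Real.pi * n / N : ℝ) : ℂ) * Complex.I by
    push_cast; ring]
  exact Complex.norm_exp_ofReal_mul_I _

theorem ex_mul_self (N : ℕ) (n : ℤ) : ex N (N * n) = 1 := by
  rcases Nat.eq_zero_or_pos N with h | h
  · simp [ex, h]
  · rw [ex, Complex.exp_eq_one_iff]
    refine ⟨n, ?_⟩
    have : (N : ℂ) ≠ 0 := by exact_mod_cast h.ne'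
    push_cast; field_simp

theorem ex_congr (N : ℕ) {m n : ℤ} (h : (N : ℤ) ∣ m - n) : ex N m = ex N n := by
  obtain ⟨c, hc⟩ := h
  rw [show m = n + N * c by linarith, ex_add, ex_mul_self, mul_one]

theorem ex_scale (N M : ℕ) (hM : M ≠ 0) (n : ℤ) : ex (M * N) (M * n) = ex N n := by
  rw [ex, ex]; congr 1
  have : (M : ℂ) ≠ 0 := by exact_mod_cast hM
  push_cast
  rcases Nat.eq_zero_or_pos N with h | h
  · simp [h]
  · have : (N : ℂ) ≠ 0 := by exact_mod_cast h.ne'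
    field_simp

theorem ex_nat_mul (N : ℕ) (t : ℕ) (n : ℤ) : ex N (t * n) = ex N n ^ t := by
  rw [ex, ex, ← Complex.exp_nat_mul]; congr 1; push_cast; ring

theorem ex_ne_one (N : ℕ) (hN : N ≠ 0) (n : ℤ) (h : ¬ (N : ℤ) ∣ n) : ex N n ≠ 1 := by
  rw [ex, Ne, Complex.exp_eq_one_iff]
  rintro ⟨m, hm⟩
  apply h
  refine ⟨m, ?_⟩
  have h1 : (N : ℂ) ≠ 0 := by exact_mod_cast hN
  have h2 : (2 * Real.pi * Complex.I : ℂ) ≠ 0 := Complex.two_pi_I_ne_zero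
  have : (n : ℂ) = N * m := by
    rw [div_eq_iff h1] at hm
    apply mul_left_cancel₀ h2
    rw [hm]; ring
  exact_mod_cast this

theorem ex_geom (p : ℕ) (hp : p.Prime) (u : ℤ) (hu : ¬ (p : ℤ) ∣ u) (B : ℕ) (hB : p ∣ B) :
    ∑ t ∈ Finset.range B, ex p (t * u) = 0 := by
  simp_rw [ex_nat_mul]
  rw [geom_sum_eq (ex_ne_one p hp.ne_zero u hu), ← ex_nat_mul]
  obtain ⟨c, rfl⟩ := hB
  rw [show ((p * c : ℕ) : ℤ) * u = p * (c * u) by push_cast; ring, ex_mul_self]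
  simp

theorem sum_range_mul' {M : Type*} [AddCommMonoid M] (A B : ℕ) (F : ℕ → M) :
    ∑ s ∈ Finset.range (A * B), F s = ∑ r ∈ Finset.range A, ∑ t ∈ Finset.range B, F (r + A * t) := by
  rw [Finset.sum_comm]
  induction B with
  | zero => simp
  | succ B ih =>
    rw [Finset.sum_range_succ, ← ih, Nat.mul_succ, Finset.sum_range_add]
    congr 1
    exact Finset.sum_congr rfl fun x _ => by rw [add_comm]

theorem eval_add_mod (f : ℤ[X]) (x y : ℤ) : ∃ c, f.eval (x + y) = f.eval x + f.derivative.eval x * y + c * y ^ 2 := by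
  obtain ⟨c, hc⟩ := f.binomExpansion x y
  exact ⟨c, hc⟩

open scoped Classical in
theorem shift_vanish (p : ℕ) (hp : p.Prime) (m δ : ℕ) (hm : δ + 1 ≤ m) (f : ℤ[X]) (P : ℤ → Prop)
    (hP : ∀ s t : ℤ, P (s + (p : ℤ) ^ m * t) ↔ P s)
    (h1 : ∀ s, P s → (p : ℤ) ^ δ ∣ f.derivative.eval s)
    (h2 : ∀ s, P s → ¬ (p : ℤ) ^ (δ + 1) ∣ f.derivative.eval s) :
    ∑ s ∈ (Finset.range (p ^ (m + δ + 1))).filter (fun s : ℕ => P (s : ℤ)), ex (p ^ (m + δ + 1)) (f.eval (s : ℤ)) = 0 := by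
  rw [Finset.sum_filter, add_assoc, pow_add, sum_range_mul']
  refine Finset.sum_eq_zero fun r _ => ?_
  by_cases hr : P r
  · obtain ⟨u, hu⟩ := h1 r hr
    have hpu : ¬ (p : ℤ) ∣ u := by
      rintro ⟨v, rfl⟩
      exact h2 r hr ⟨v, by rw [hu]; ring⟩
    have key : ∀ t : ℕ, (if P ((r + p ^ m * t : ℕ) : ℤ) then
        ex (p ^ m * p ^ (δ + 1)) (f.eval ((r + p ^ m * t : ℕ) : ℤ)) else 0) =
        ex (p ^ m * p ^ (δ + 1)) (f.eval (r : ℤ)) * ex p (t * u) := by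
      intro t
      have e0 : ((r + p ^ m * t : ℕ) : ℤ) = r + (p : ℤ) ^ m * t := by push_cast; ring
      rw [if_pos (by rw [e0, hP]; exact hr), e0]
      obtain ⟨c, hc⟩ := eval_add_mod f r ((p : ℤ) ^ m * t)
      have hpm : p ^ m * p ^ δ ≠ 0 := mul_ne_zero (pow_ne_zero _ hp.ne_zero) (pow_ne_zero _ hp.ne_zero)
      rw [← ex_scale p (p ^ m * p ^ δ) hpm (t * u), show p ^ m * p ^ δ * p = p ^ m * p ^ (δ + 1) by ring,
        ← ex_add]
      apply ex_congr
      rw [hc, hu]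
      obtain ⟨n, rfl⟩ : ∃ n, m = δ + 1 + n := ⟨m - (δ + 1), by omega⟩
      refine ⟨c * p ^ n * t ^ 2, ?_⟩
      push_cast
      ring
    rw [Finset.sum_congr rfl fun t _ => key t, ← Finset.mul_sum, ex_geom p hp u hpu, mul_zero]
    exact dvd_pow_self p (by omega)
  · refine Finset.sum_eq_zero fun t _ => if_neg ?_
    rw [show ((r + p ^ m * t : ℕ) : ℤ) = r + (p : ℤ) ^ m * t by push_cast; ring, hP]
    exact hr

theorem weil_int (p : ℕ) [hp : Fact p.Prime] (f : ℤ[X])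
    (hd1 : 1 ≤ (f.map (Int.castRingHom (ZMod p))).natDegree)
    (hdp : (f.map (Int.castRingHom (ZMod p))).natDegree < p) :
    ‖∑ s ∈ Finset.range p, ex p (f.eval (s : ℤ))‖ ≤
      (f.map (Int.castRingHom (ZMod p))).natDegree * √p := by
  have h := weil_bound p (f.map (Int.castRingHom (ZMod p))) hd1 hdp (ZMod.stdAddChar (N := p)) (by
    intro h
    have := ZMod.injective_stdAddChar (N := p) (a₁ := 0) (a₂ := 1) (by rw [h]; simp)
    exact zero_ne_one this)
  convert h using 2
  refine Finset.sum_nbij' (fun s => (s : ZMod p)) ZMod.val (by simp) (by simp [ZMod.val_lt]) ?_ ?_ ?_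
  · intro s hs; exact ZMod.val_cast_of_lt (Finset.mem_range.1 hs)
  · intro s _; simp
  · intro s _
    have : (f.map (Int.castRingHom (ZMod p))).eval (s : ZMod p) = ((f.eval (s : ℤ) : ℤ) : ZMod p) := by
      have := Polynomial.eval_map_apply (Int.castRingHom (ZMod p)) (p := f) (s : ℤ)
      simp [this]
    rw [this, ZMod.stdAddChar_coe, ex]

theorem map_eq_zero_iff_dvd (p : ℕ) (G : ℤ[X]) :
    G.map (Int.castRingHom (ZMod p)) = 0 ↔ ∀ i, (p : ℤ) ∣ G.coeff i := by
  rw [Polynomial.ext_iff]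
  simp only [coeff_map, coeff_zero, eq_intCast, ZMod.intCast_zmod_eq_zero_iff_dvd]

theorem extract_p (p : ℕ) (hp : p.Prime) (G : ℤ[X]) (hG : G ≠ 0) :
    ∃ n H, G = C ((p : ℤ) ^ n) * H ∧ H.map (Int.castRingHom (ZMod p)) ≠ 0 := by
  have hprime : Prime (C (p : ℤ)) := Polynomial.prime_C_iff.2 (Nat.prime_iff_prime_int.1 hp)
  have hfin : FiniteMultiplicity (C (p : ℤ)) G := FiniteMultiplicity.of_prime_left hprime hG
  obtain ⟨H, hH, hn⟩ := hfin.exists_eq_pow_mul_and_not_dvd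
  refine ⟨_, H, by rw [C_pow]; exact hH, ?_⟩
  rw [Ne, map_eq_zero_iff_dvd, ← C_dvd_iff_dvd_coeff]
  exact hn
end

section
open Polynomial

theorem ex_pow_scale (p : ℕ) (hp : p.Prime) (j c : ℕ) (hc : c ≤ j) (n : ℤ) :
    ex (p ^ j) ((p : ℤ) ^ c * n) = ex (p ^ (j - c)) n := by
  have := ex_scale (p ^ (j - c)) (p ^ c) (pow_ne_zero _ hp.ne_zero) n
  rw [← pow_add, show c + (j - c) = j by omega] at this
  rw [← this]; push_cast; rfl

/-- sum over several periods -/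
theorem sum_periods (N B : ℕ) (h : ℤ[X]) :
    ∑ s ∈ Finset.range (N * B), ex N (h.eval (s : ℤ)) =
      B * ∑ s ∈ Finset.range N, ex N (h.eval (s : ℤ)) := by
  rw [sum_range_mul', Finset.mul_sum]
  refine Finset.sum_congr rfl fun r _ => ?_
  rw [Finset.sum_congr rfl (g := fun _ => ex N (h.eval (r : ℤ))), Finset.sum_const, Finset.card_range,
    nsmul_eq_mul]
  intro t _
  apply ex_congr
  have := h.sub_dvd_eval_sub ((r + N * t : ℕ) : ℤ) (r : ℤ)
  refine dvd_trans ⟨t, ?_⟩ this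
  push_cast; ring

theorem norm_sum_ex_le (s : Finset ℕ) (N : ℕ) (F : ℕ → ℤ) : ‖∑ x ∈ s, ex N (F x)‖ ≤ s.card := by
  refine (norm_sum_le _ _).trans ?_
  simp [ex_norm]

theorem coeff_comp_lin (f : ℤ[X]) (ν p : ℤ) (i : ℕ) :
    (f.comp (C ν + C p * X)).coeff i = (taylor ν f).coeff i * p ^ i := by
  have : f.comp (C ν + C p * X) = (taylor ν f).comp (C p * X) := by
    rw [taylor_apply, comp_assoc]; congr 1; simp [add_comm]
  rw [this, comp_C_mul_X_coeff]

/-- the local factor at a root -/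
theorem hua_local (p : ℕ) [hp : Fact p.Prime] (k : ℕ) (f : ℤ[X]) (hfk : f.natDegree ≤ k)
    (hf : ∃ i, 1 ≤ i ∧ ¬ (p : ℤ) ∣ f.coeff i) (t : ℕ) (F : ℤ[X])
    (hF : f.derivative = C ((p : ℤ) ^ t) * F) (hF0 : F.map (Int.castRingHom (ZMod p)) ≠ 0) (ν : ℤ) :
    ∃ (σ : ℕ) (h : ℤ[X]) (τ : ℕ) (H : ℤ[X]), 1 ≤ σ ∧ σ ≤ k ∧
      (∀ z : ℤ, f.eval (ν + p * z) = f.eval ν + (p : ℤ) ^ σ * h.eval z) ∧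
      h.natDegree ≤ k ∧ (∃ i, 1 ≤ i ∧ ¬ (p : ℤ) ∣ h.coeff i) ∧
      h.derivative = C ((p : ℤ) ^ τ) * H ∧ H.map (Int.castRingHom (ZMod p)) ≠ 0 ∧
      (H.map (Int.castRingHom (ZMod p))).roots.card ≤
        (F.map (Int.castRingHom (ZMod p))).rootMultiplicity (ν : ZMod p) := by
  have hpp : Prime (p : ℤ) := Nat.prime_iff_prime_int.1 hp.out
  have hp0 : (p : ℤ) ≠ 0 := hpp.ne_zero
  set φ := Int.castRingHom (ZMod p) with hφ
  have htm : ∀ G : ℤ[X], (taylor ν G).map φ = taylor (ν : ZMod p) (G.map φ) := by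
    intro G
    rw [taylor_apply, taylor_apply, Polynomial.map_comp]; simp [hφ]
  -- a good Taylor coefficient
  have hi : ∃ i, 1 ≤ i ∧ i ≤ k ∧ ¬ (p : ℤ) ∣ (taylor ν f).coeff i := by
    have hd : 1 ≤ (f.map φ).natDegree := by
      obtain ⟨i, hi, hn⟩ := hf
      refine hi.trans (le_natDegree_of_ne_zero ?_)
      rw [coeff_map, hφ, eq_intCast, Ne, ZMod.intCast_zmod_eq_zero_iff_dvd]; exact hn
    refine ⟨(f.map φ).natDegree, hd, natDegree_map_le.trans hfk, ?_⟩
    have h1 : (taylor (ν : ZMod p) (f.map φ)).coeff (f.map φ).natDegree ≠ 0 := by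
      have h2 : taylor (ν : ZMod p) (f.map φ) ≠ 0 := by
        intro h; rw [← natDegree_taylor _ (ν : ZMod p), h] at hd; simp at hd
      have := leadingCoeff_ne_zero.2 h2
      rwa [leadingCoeff, natDegree_taylor] at this
    rw [← htm, coeff_map, hφ, eq_intCast, Ne, ZMod.intCast_zmod_eq_zero_iff_dvd] at h1
    exact h1
  obtain ⟨i₀, hi1, hik, hin⟩ := hi
  set h0 : ℤ[X] := f.comp (C ν + C (p : ℤ) * X) - C (f.eval ν) with hh0
  have hc0 : h0.coeff 0 = 0 := by
    rw [hh0, coeff_sub, coeff_comp_lin]; simp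
  have hcp : ∀ i, 1 ≤ i → h0.coeff i = (taylor ν f).coeff i * (p : ℤ) ^ i := by
    intro i hi
    rw [hh0, coeff_sub, coeff_comp_lin, coeff_C_of_ne_zero (by omega), sub_zero]
  have hne : h0 ≠ 0 := by
    intro h
    have := hcp i₀ hi1
    rw [h, coeff_zero, eq_comm, mul_eq_zero] at this
    rcases this with h | h
    · exact hin (h ▸ dvd_zero _)
    · exact pow_ne_zero _ hp0 h
  obtain ⟨σ, h, hh, hhm⟩ := extract_p p hp.out h0 hne
  have hcoef : ∀ i, h0.coeff i = (p : ℤ) ^ σ * h.coeff i := by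
    intro i; rw [hh, coeff_C_mul]
  have hhc0 : h.coeff 0 = 0 := by
    have := hcoef 0
    rw [hc0, eq_comm, mul_eq_zero] at this
    exact this.resolve_left (pow_ne_zero _ hp0)
  have hhi : ∃ i, 1 ≤ i ∧ ¬ (p : ℤ) ∣ h.coeff i := by
    by_contra! hcon
    apply hhm
    rw [map_eq_zero_iff_dvd]
    intro i
    rcases Nat.eq_zero_or_pos i with rfl | hi
    · rw [hhc0]; exact dvd_zero _
    · exact hcon i hi
  have hσ1 : 1 ≤ σ := by
    by_contra! hlt
    obtain ⟨i, hi, hn⟩ := hhi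
    apply hn
    have := hcoef i
    rw [show σ = 0 by omega, pow_zero, one_mul, hcp i hi] at this
    rw [← this]
    exact dvd_mul_of_dvd_right (dvd_pow_self _ (by omega)) _
  have hσk : σ ≤ k := by
    have := hcoef i₀
    rw [hcp i₀ hi1] at this
    have hd : (p : ℤ) ^ σ ∣ (p : ℤ) ^ i₀ * (taylor ν f).coeff i₀ := ⟨_, by rw [mul_comm, this]⟩
    have hd2 := (hpp.coprime_iff_not_dvd.2 hin).pow_left (m := σ) |>.dvd_of_dvd_mul_right hd
    exact ((pow_dvd_pow_iff hp0 hpp.not_isUnit).1 hd2).trans hik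
  have hev : ∀ z : ℤ, f.eval (ν + p * z) = f.eval ν + (p : ℤ) ^ σ * h.eval z := by
    intro z
    have := congrArg (Polynomial.eval z) hh
    rw [hh0] at this
    simp [eval_comp] at this
    linarith
  have hhd : h.natDegree ≤ k := by
    rw [natDegree_le_iff_coeff_eq_zero]
    intro i hi
    have h1 := hcoef i
    rw [hcp i (by omega), coeff_eq_zero_of_natDegree_lt (p := taylor ν f) (by rw [natDegree_taylor]; omega),
      zero_mul, eq_comm, mul_eq_zero] at h1
    exact h1.resolve_left (pow_ne_zero _ hp0)
  have hd0 : h.derivative ≠ 0 := by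
    intro hd
    obtain ⟨i, hi, hn⟩ := hhi
    have := congrArg (fun q => coeff q (i - 1)) hd
    simp only [coeff_derivative, coeff_zero, mul_eq_zero] at this
    rw [show i - 1 + 1 = i by omega] at this
    rcases this with h | h
    · exact hn (h ▸ dvd_zero _)
    · norm_cast at h
  obtain ⟨τ, H, hH, hHm⟩ := extract_p p hp.out _ hd0
  refine ⟨σ, h, τ, H, hσ1, hσk, hev, hhd, hhi, hH, hHm, ?_⟩
  set m := (F.map φ).rootMultiplicity (ν : ZMod p) with hm
  have hcm : ¬ (p : ℤ) ∣ (taylor ν F).coeff m := by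
    have h1 : (taylor (ν : ZMod p) (F.map φ)).coeff m ≠ 0 := by
      rw [hm, rootMultiplicity_eq_natTrailingDegree, ← taylor_apply]
      change trailingCoeff _ ≠ 0
      rw [trailingCoeff_nonzero_iff_nonzero]
      intro h
      exact hF0 ((taylor_injective (ν : ZMod p)) (by rw [h, map_zero]))
    rw [← htm, coeff_map, hφ, eq_intCast, Ne, ZMod.intCast_zmod_eq_zero_iff_dvd] at h1
    exact h1
  have hrel : ∀ i, (p : ℤ) ^ (σ + τ) * H.coeff i = (p : ℤ) ^ (t + 1 + i) * (taylor ν F).coeff i := by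
    intro i
    have e1 : h0.derivative = C (p : ℤ) * (f.derivative.comp (C ν + C (p : ℤ) * X)) := by
      rw [hh0]; simp [derivative_comp]
    rw [hh, derivative_C_mul, hH, hF, mul_comp, C_comp] at e1
    have := congrArg (fun q => coeff q i) e1
    simp only [coeff_C_mul, coeff_comp_lin] at this
    rw [pow_add, mul_assoc, this]; ring
  have hle : σ + τ ≤ t + 1 + m := by
    have hd : (p : ℤ) ^ (σ + τ) ∣ (p : ℤ) ^ (t + 1 + m) * (taylor ν F).coeff m := ⟨_, (hrel m).symm⟩
    have hd2 := (hpp.coprime_iff_not_dvd.2 hcm).pow_left (m := σ + τ) |>.dvd_of_dvd_mul_right hd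
    exact (pow_dvd_pow_iff hp0 hpp.not_isUnit).1 hd2
  refine (card_roots' _).trans ?_
  rw [natDegree_le_iff_coeff_eq_zero]
  intro i hi
  rw [coeff_map, hφ, eq_intCast, ZMod.intCast_zmod_eq_zero_iff_dvd]
  have := hrel i
  obtain ⟨n, hn⟩ : ∃ n, t + 1 + i = σ + τ + (n + 1) := ⟨t + i - (σ + τ), by omega⟩
  rw [hn, pow_add _ _ (n + 1), mul_assoc] at this
  have := mul_left_cancel₀ (pow_ne_zero _ hp0) this
  rw [this, pow_succ]
  exact ⟨(p : ℤ) ^ n * (taylor ν F).coeff i, by ring⟩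
end

section
open Polynomial

theorem sum_range_zmod (p : ℕ) [NeZero p] {M : Type*} [AddCommMonoid M] (F : ZMod p → M) :
    ∑ s ∈ Finset.range p, F (s : ZMod p) = ∑ x : ZMod p, F x := by
  refine Finset.sum_nbij' (fun s => (s : ZMod p)) ZMod.val (by simp) (by simp [ZMod.val_lt]) ?_ ?_ ?_
  · intro s hs; exact ZMod.val_cast_of_lt (Finset.mem_range.1 hs)
  · intro s _; simp
  · intro s _; rfl

theorem hua_prim (p : ℕ) [hp : Fact p.Prime] (k : ℕ) (hk : 2 ≤ k) (P : ℝ) (hP1 : 1 ≤ P)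
    (hPs : √p ≤ P) (hPσ : ∀ σ, 1 ≤ σ → σ ≤ k → (p : ℝ) ^ (σ - 1) ≤ P ^ σ) (j : ℕ) :
    ∀ f : ℤ[X], f.natDegree ≤ k → (∃ i, 1 ≤ i ∧ ¬ (p : ℤ) ∣ f.coeff i) → ∀ (t : ℕ) (F : ℤ[X]),
    f.derivative = C ((p : ℤ) ^ t) * F → F.map (Int.castRingHom (ZMod p)) ≠ 0 → ∀ M : ℕ, 1 ≤ M →
    (F.map (Int.castRingHom (ZMod p))).roots.card ≤ M →
    ‖∑ s ∈ Finset.range (p ^ j), ex (p ^ j) (f.eval (s : ℤ))‖ ≤ (k : ℝ) ^ 3 * M * P ^ j := by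
  classical
  induction j using Nat.strong_induction_on with
  | _ j ih =>
  intro f hfk hf t F hF hF0 M hM1 hM
  have hpp : Prime (p : ℤ) := Nat.prime_iff_prime_int.1 hp.out
  have hp0 : (p : ℤ) ≠ 0 := hpp.ne_zero
  have hpr : (0 : ℝ) < p := by exact_mod_cast hp.out.pos
  have hk1 : (1 : ℝ) ≤ k := by exact_mod_cast (by omega : 1 ≤ k)
  have hM1' : (1 : ℝ) ≤ M := by exact_mod_cast hM1
  have hPj : 1 ≤ P ^ j := one_le_pow₀ hP1
  have hptk : p ^ t ≤ k := by
    obtain ⟨i, hi, hn⟩ := hf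
    have h1 := congrArg (fun q => coeff q (i - 1)) hF
    simp only [coeff_derivative, coeff_C_mul] at h1
    rw [show i - 1 + 1 = i by omega, show ((i - 1 : ℕ) : ℤ) + 1 = (i : ℤ) by omega] at h1
    have hd : (p : ℤ) ^ t ∣ (i : ℤ) * f.coeff i := ⟨_, by rw [mul_comm, h1]⟩
    have hd2 := (hpp.coprime_iff_not_dvd.2 hn).pow_left (m := t) |>.dvd_of_dvd_mul_right hd
    have hik : i ≤ k := by
      by_contra! hlt
      exact hn (by rw [coeff_eq_zero_of_natDegree_lt (by omega)]; exact dvd_zero _)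
    have : p ^ t ∣ i := by exact_mod_cast hd2
    exact (Nat.le_of_dvd (by omega) this).trans hik
  rcases le_or_gt j (2 * t + 1) with hj | hj
  · rcases le_or_gt p k with hpk | hpk
    · have h1 : p ^ j ≤ k ^ 3 := by
        calc p ^ j ≤ p ^ (2 * t + 1) := Nat.pow_le_pow_right hp.out.pos hj
          _ = p ^ t * p ^ t * p := by ring
          _ ≤ k * k * k := by gcongr
          _ = k ^ 3 := by ring
      have h2 : ((p ^ j : ℕ) : ℝ) ≤ k ^ 3 := by exact_mod_cast h1
      have h3 := norm_sum_ex_le (Finset.range (p ^ j)) (p ^ j) (fun s => f.eval (s : ℤ))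
      rw [Finset.card_range] at h3
      have h4 : (k : ℝ) ^ 3 ≤ (k : ℝ) ^ 3 * M * P ^ j := by
        rw [mul_assoc]
        exact le_mul_of_one_le_right (by positivity) (by nlinarith)
      linarith
    · have ht : t = 0 := by
        by_contra h0
        have := Nat.le_self_pow h0 p
        omega
      have hj' : j = 0 ∨ j = 1 := by omega
      have hk3 : (k : ℝ) ≤ (k : ℝ) ^ 3 := le_self_pow₀ hk1 (by norm_num)
      rcases hj' with rfl | rfl
      · simp [ex_norm]
        nlinarith
      · have hd : 1 ≤ (f.map (Int.castRingHom (ZMod p))).natDegree := by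
          obtain ⟨i, hi, hn⟩ := hf
          refine hi.trans (le_natDegree_of_ne_zero ?_)
          rw [coeff_map, eq_intCast, Ne, ZMod.intCast_zmod_eq_zero_iff_dvd]; exact hn
        have hd2 : (f.map (Int.castRingHom (ZMod p))).natDegree ≤ k := natDegree_map_le.trans hfk
        have := weil_int p f hd (by omega)
        rw [pow_one, pow_one]
        have hd3 : ((f.map (Int.castRingHom (ZMod p))).natDegree : ℝ) ≤ k := by exact_mod_cast hd2
        calc _ ≤ _ := this
          _ ≤ (k : ℝ) * P := by gcongr
          _ ≤ (k : ℝ) ^ 3 * M * P := by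
            gcongr; nlinarith
  · -- main step
    rw [← Finset.sum_filter_add_sum_filter_not (Finset.range (p ^ j)) (fun s : ℕ => ¬ (p : ℤ) ∣ F.eval (s : ℤ))]
    have hderiv : ∀ s : ℤ, f.derivative.eval s = (p : ℤ) ^ t * F.eval s := by
      intro s; rw [hF]; simp
    have hper : ∀ s z : ℤ, (p : ℤ) ∣ F.eval (s + p * z) ↔ (p : ℤ) ∣ F.eval s := by
      intro s z
      have h1 := F.sub_dvd_eval_sub (s + p * z) s
      have h2 : (p : ℤ) ∣ F.eval (s + p * z) - F.eval s := dvd_trans ⟨z, by ring⟩ h1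
      constructor
      · intro h; have := dvd_sub h h2; simpa using this
      · intro h; have := dvd_add h h2; simpa using this
    have hv := shift_vanish p hp.out (j - t - 1) t (by omega) f (fun s => ¬ (p : ℤ) ∣ F.eval s)
      (by
        intro s z
        obtain ⟨n, hn⟩ : ∃ n, j - t - 1 = n + 1 := ⟨j - t - 2, by omega⟩
        rw [hn, pow_succ', mul_assoc, hper])
      (by intro s _; rw [hderiv]; exact dvd_mul_right _ _)
      (by
        intro s hs hd
        rw [hderiv, pow_succ] at hd
        exact hs ((mul_dvd_mul_iff_left (pow_ne_zero _ hp0)).1 hd))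
    rw [show j - t - 1 + t + 1 = j by omega] at hv
    have hv' : ∑ s ∈ (Finset.range (p ^ j)).filter (fun s : ℕ => ¬ (p : ℤ) ∣ F.eval (s : ℤ)),
        ex (p ^ j) (f.eval (s : ℤ)) = 0 := by convert hv
    rw [hv', zero_add]
    simp only [not_not]
    obtain ⟨n, rfl⟩ : ∃ n, j = n + 1 := ⟨j - 1, by omega⟩
    rw [Finset.sum_filter, Finset.range_eq_Ico, pow_succ' p n, ← Finset.range_eq_Ico, sum_range_mul',
      ← pow_succ' p n]
    have hloc : ∀ ν ∈ Finset.range p, ‖∑ z ∈ Finset.range (p ^ n),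
        if (p : ℤ) ∣ F.eval ((ν + p * z : ℕ) : ℤ) then ex (p ^ (n + 1)) (f.eval ((ν + p * z : ℕ) : ℤ)) else 0‖ ≤
        ((k : ℝ) ^ 3 * P ^ (n + 1)) *
          ((F.map (Int.castRingHom (ZMod p))).roots.count (ν : ZMod p) : ℕ) := by
      intro ν _
      by_cases hν : (p : ℤ) ∣ F.eval (ν : ℤ)
      swap
      · rw [Finset.sum_eq_zero]
        · rw [norm_zero]; positivity
        · intro z _
          rw [if_neg]
          push_cast
          rw [hper]; exact hν
      have hm1 : 1 ≤ (F.map (Int.castRingHom (ZMod p))).roots.count (ν : ZMod p) := by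
        rw [Nat.one_le_iff_ne_zero, Multiset.count_ne_zero, mem_roots hF0, IsRoot]
        have := Polynomial.eval_map_apply (Int.castRingHom (ZMod p)) (p := F) (ν : ℤ)
        simp only [eq_intCast, Int.cast_natCast] at this
        rw [this, ZMod.intCast_zmod_eq_zero_iff_dvd]
        exact hν
      obtain ⟨σ, h, τ, H, hσ1, hσk, hev, hhd, hhi, hH, hHm, hroots⟩ :=
        hua_local p k f hfk hf t F hF hF0 (ν : ℤ)
      rw [Int.cast_natCast, ← count_roots] at hroots
      set m := (F.map (Int.castRingHom (ZMod p))).roots.count (ν : ZMod p) with hm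
      have hm1' : (1 : ℝ) ≤ m := by exact_mod_cast hm1
      rw [Finset.sum_congr rfl (g := fun z : ℕ => ex (p ^ (n + 1)) (f.eval (ν : ℤ)) *
          ex (p ^ (n + 1)) ((p : ℤ) ^ σ * h.eval (z : ℤ)))]
      swap
      · intro z _
        push_cast
        rw [if_pos (by rw [hper]; exact hν), hev, ex_add]
      rw [← Finset.mul_sum, norm_mul, ex_norm, one_mul]
      rcases le_or_gt (n + 1) σ with hle | hlt
      · have h3 := norm_sum_ex_le (Finset.range (p ^ n)) (p ^ (n + 1)) (fun z => (p : ℤ) ^ σ * h.eval (z : ℤ))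
        rw [Finset.card_range] at h3
        have h4 := hPσ (n + 1) (by omega) (by omega)
        have h5 : P ^ (n + 1) ≤ (k : ℝ) ^ 3 * P ^ (n + 1) * m := by
          have : 1 ≤ (k : ℝ) ^ 3 := one_le_pow₀ hk1
          have h6 : 1 ≤ (k : ℝ) ^ 3 * m := by nlinarith
          have : 0 < P ^ (n + 1) := by positivity
          nlinarith
        push_cast at h3
        simp only [Nat.add_sub_cancel] at h4
        linarith
      · have hs : ∀ z : ℕ, ex (p ^ (n + 1)) ((p : ℤ) ^ σ * h.eval (z : ℤ)) =
            ex (p ^ (n + 1 - σ)) (h.eval (z : ℤ)) := fun z => ex_pow_scale p hp.out _ _ hlt.le _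
        simp only [hs]
        rw [show p ^ n = p ^ (n + 1 - σ) * p ^ (σ - 1) by rw [← pow_add]; congr 1; omega, sum_periods,
          norm_mul]
        have h7 := ih (n + 1 - σ) (by omega) h hhd hhi τ H hH hHm m hm1 hroots
        have h8 := hPσ σ hσ1 hσk
        have h9 : ‖((p ^ (σ - 1) : ℕ) : ℂ)‖ = (p : ℝ) ^ (σ - 1) := by simp
        rw [h9]
        calc _ ≤ P ^ σ * ((k : ℝ) ^ 3 * m * P ^ (n + 1 - σ)) := by gcongr
          _ = (k : ℝ) ^ 3 * (P ^ σ * P ^ (n + 1 - σ)) * m := by ring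
          _ = _ := by rw [← pow_add, show σ + (n + 1 - σ) = n + 1 by omega]
    refine (norm_sum_le_of_le _ hloc).trans ?_
    rw [← Finset.mul_sum]
    have hcnt : ∑ ν ∈ Finset.range p, ((F.map (Int.castRingHom (ZMod p))).roots.count (ν : ZMod p)) ≤ M := by
      rw [sum_range_zmod p (fun x => (F.map (Int.castRingHom (ZMod p))).roots.count x),
        Multiset.sum_count_eq_card (by simp)]
      exact hM
    have hcnt' : ∑ ν ∈ Finset.range p, (((F.map (Int.castRingHom (ZMod p))).roots.count (ν : ZMod p) : ℕ) : ℝ) ≤ M := by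
      exact_mod_cast hcnt
    calc _ ≤ ((k : ℝ) ^ 3 * P ^ (n + 1)) * M := by gcongr
      _ = _ := by ring
end

section
open Polynomial

theorem vand_div (m : ℕ) : ∃ D : ℕ, 0 < D ∧ ∀ (N : ℤ) (P : ℤ[X]), P.natDegree ≤ m →
    (∀ n : ℤ, N ∣ P.eval n) → ∀ i, N ∣ D * P.coeff i := by
  set V : Matrix (Fin (m + 1)) (Fin (m + 1)) ℤ := Matrix.vandermonde (fun i => ((i : ℕ) : ℤ)) with hV
  have hdet : V.det ≠ 0 := Matrix.det_vandermonde_ne_zero_iff.2 (fun a b h => by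
    apply Fin.ext; exact_mod_cast h)
  refine ⟨V.det.natAbs, Int.natAbs_pos.2 hdet, fun N P hP hN i => ?_⟩
  rcases le_or_gt i m with hi | hi
  · have h1 : V.adjugate.mulVec (V.mulVec (fun i => P.coeff i)) = V.det • (fun i : Fin (m + 1) => P.coeff i) := by
      rw [Matrix.mulVec_mulVec, Matrix.adjugate_mul, Matrix.smul_mulVec, Matrix.one_mulVec]
    have h2 : ∀ r, N ∣ V.mulVec (fun i => P.coeff i) r := by
      intro r
      have : V.mulVec (fun i => P.coeff i) r = P.eval ((r : ℕ) : ℤ) := by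
        rw [eval_eq_sum_range' (n := m + 1) (by omega), Finset.sum_range]
        simp only [Matrix.mulVec, dotProduct, hV, Matrix.vandermonde_apply]
        exact Finset.sum_congr rfl fun x _ => mul_comm _ _
      rw [this]; exact hN _
    have h3 := congrFun h1 ⟨i, by omega⟩
    have h4 : N ∣ V.adjugate.mulVec (V.mulVec (fun i => P.coeff i)) ⟨i, by omega⟩ :=
      by
        rw [Matrix.mulVec, dotProduct]
        exact Finset.dvd_sum fun x _ => Dvd.dvd.mul_left (h2 x) _
    rw [h3] at h4
    simp only [Pi.smul_apply, smul_eq_mul] at h4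
    rw [Int.natCast_natAbs]
    rcases abs_choice V.det with h | h <;> rw [h]
    · exact h4
    · rw [neg_mul]; exact (dvd_neg).2 h4
  · rw [coeff_eq_zero_of_natDegree_lt (by omega), mul_zero]; exact dvd_zero _

theorem derivative_val_div (k : ℕ) : ∃ D : ℕ, 0 < D ∧ ∀ (N : ℤ) (f : ℤ[X]), f.natDegree ≤ k →
    (∀ n : ℤ, N ∣ f.derivative.eval n) → ∀ i, 1 ≤ i → N ∣ D * f.coeff i := by
  obtain ⟨D, hD, h⟩ := vand_div k
  refine ⟨D * k.factorial, Nat.mul_pos hD (Nat.factorial_pos _), fun N f hf hN i hi => ?_⟩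
  have h1 := h N f.derivative ((natDegree_derivative_le f).trans (by omega)) hN (i - 1)
  rw [coeff_derivative, show i - 1 + 1 = i by omega, show ((i - 1 : ℕ) : ℤ) + 1 = (i : ℤ) by omega] at h1
  rcases le_or_gt i k with hik | hik
  · obtain ⟨c, hc⟩ := Nat.dvd_factorial (by omega) hik
    rw [hc]
    refine h1.trans ⟨c, ?_⟩
    push_cast; ring
  · rw [coeff_eq_zero_of_natDegree_lt (by omega), mul_zero]; exact dvd_zero _

theorem hua_gen (p : ℕ) [hp : Fact p.Prime] (k : ℕ) (hk : 2 ≤ k) (P : ℝ) (hP1 : 1 ≤ P)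
    (hPs : √p ≤ P) (hPσ : ∀ σ, 1 ≤ σ → σ ≤ k → (p : ℝ) ^ (σ - 1) ≤ P ^ σ) (j c : ℕ) (hcj : c ≤ j)
    (f : ℤ[X]) (hfk : f.natDegree ≤ k) (hdiv : ∀ i, 1 ≤ i → (p : ℤ) ^ c ∣ f.coeff i)
    (hor : c = j ∨ ∃ i, 1 ≤ i ∧ ¬ (p : ℤ) ^ (c + 1) ∣ f.coeff i) :
    ‖∑ s ∈ Finset.range (p ^ j), ex (p ^ j) (f.eval (s : ℤ))‖ ≤
      (k : ℝ) ^ 4 * ((p : ℝ) ^ c) ^ 3 * P ^ j := by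
  have hp1 : (1 : ℝ) ≤ p := by exact_mod_cast hp.out.one_lt.le
  have hk1 : (1 : ℝ) ≤ k := by exact_mod_cast (by omega : 1 ≤ k)
  have hpp : Prime (p : ℤ) := Nat.prime_iff_prime_int.1 hp.out
  have hp0 : (p : ℤ) ≠ 0 := hpp.ne_zero
  have hpc : 1 ≤ (p : ℝ) ^ c := one_le_pow₀ hp1
  have hpc3 : (p : ℝ) ^ c ≤ ((p : ℝ) ^ c) ^ 3 := le_self_pow₀ hpc (by norm_num)
  have hPj : 1 ≤ P ^ j := one_le_pow₀ hP1
  have hk4 : 1 ≤ (k : ℝ) ^ 4 := one_le_pow₀ hk1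
  rcases hor with rfl | ⟨i, hi, hn⟩
  · have h3 := norm_sum_ex_le (Finset.range (p ^ c)) (p ^ c) (fun s => f.eval (s : ℤ))
    rw [Finset.card_range] at h3
    push_cast at h3
    refine h3.trans (hpc3.trans ?_)
    have : 1 ≤ (k : ℝ) ^ 4 * P ^ c := by nlinarith
    calc ((p : ℝ) ^ c) ^ 3 ≤ ((p : ℝ) ^ c) ^ 3 * ((k : ℝ) ^ 4 * P ^ c) :=
          le_mul_of_one_le_right (by positivity) this
      _ = _ := by ring
  · have hC : C ((p : ℤ) ^ c) ∣ f - C (f.coeff 0) := by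
      rw [C_dvd_iff_dvd_coeff]
      intro i
      rcases Nat.eq_zero_or_pos i with rfl | hi
      · simp
      · rw [coeff_sub, coeff_C_of_ne_zero (by omega), sub_zero]; exact hdiv i hi
    obtain ⟨h, hh⟩ := hC
    have hcoef : ∀ i, 1 ≤ i → f.coeff i = (p : ℤ) ^ c * h.coeff i := by
      intro i hi
      have := congrArg (fun q => coeff q i) hh
      rwa [coeff_sub, coeff_C_of_ne_zero (show i ≠ 0 by omega), sub_zero, coeff_C_mul] at this
    have hhi : ¬ (p : ℤ) ∣ h.coeff i := by
      intro hd
      apply hn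
      rw [hcoef i hi, pow_succ]
      exact mul_dvd_mul_left _ hd
    have hhk : h.natDegree ≤ k := by
      have : (f - C (f.coeff 0)).natDegree ≤ k := by rwa [natDegree_sub_C]
      rwa [hh, natDegree_C_mul (pow_ne_zero _ hp0)] at this
    have hev : ∀ s : ℤ, f.eval s = f.coeff 0 + (p : ℤ) ^ c * h.eval s := by
      intro s
      have := congrArg (Polynomial.eval s) hh
      simp at this
      linarith
    have hd0 : h.derivative ≠ 0 := by
      intro hd
      have := congrArg (fun q => coeff q (i - 1)) hd
      simp only [coeff_derivative, coeff_zero, mul_eq_zero] at this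
      rw [show i - 1 + 1 = i by omega] at this
      rcases this with h | h
      · exact hhi (h ▸ dvd_zero _)
      · norm_cast at h
    obtain ⟨t, F, hF, hF0⟩ := extract_p p hp.out _ hd0
    have hFk : (F.map (Int.castRingHom (ZMod p))).roots.card ≤ k := by
      refine (card_roots' _).trans (natDegree_map_le.trans ?_)
      have := natDegree_derivative_le h
      rw [hF, natDegree_C_mul (pow_ne_zero _ hp0)] at this
      omega
    have hmain := hua_prim p k hk P hP1 hPs hPσ (j - c) h hhk ⟨i, hi, hhi⟩ t F hF hF0 k (by omega) hFk
    have hs : ∀ s : ℕ, ex (p ^ j) (f.eval (s : ℤ)) =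
        ex (p ^ j) (f.coeff 0) * ex (p ^ (j - c)) (h.eval (s : ℤ)) := by
      intro s
      rw [hev, ex_add, ex_pow_scale p hp.out _ _ hcj]
    simp only [hs]
    rw [← Finset.mul_sum, norm_mul, ex_norm, one_mul,
      show Finset.range (p ^ j) = Finset.range (p ^ (j - c) * p ^ c) by
        rw [← pow_add]; congr 2; omega, sum_periods, norm_mul]
    have h9 : ‖((p ^ c : ℕ) : ℂ)‖ = (p : ℝ) ^ c := by simp
    rw [h9]
    have hPjc : P ^ (j - c) ≤ P ^ j := pow_le_pow_right₀ hP1 (by omega)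
    calc _ ≤ ((p : ℝ) ^ c) ^ 3 * ((k : ℝ) ^ 3 * k * P ^ j) := by
          refine mul_le_mul hpc3 (hmain.trans ?_) (norm_nonneg _) (by positivity)
          gcongr
      _ = _ := by ring

theorem triv_coprime (p : ℕ) [hp : Fact p.Prime] (D c d : ℕ) (hD : 0 < D) (x : ℤ)
    (h1 : (p : ℤ) ^ c ∣ x) (h2 : ¬ (p : ℤ) ^ (c + 1) ∣ x) (h3 : (p : ℤ) ^ d ∣ D * x) :
    p ^ d ≤ D * p ^ c := by
  have hpp : Prime (p : ℤ) := Nat.prime_iff_prime_int.1 hp.out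
  obtain ⟨u, rfl⟩ := h1
  have hu : ¬ (p : ℤ) ∣ u := fun h => h2 (by rw [pow_succ]; exact mul_dvd_mul_left _ h)
  rw [← mul_assoc] at h3
  have := (hpp.coprime_iff_not_dvd.2 hu).pow_left (m := d) |>.dvd_of_dvd_mul_right h3
  have h4 : p ^ d ∣ D * p ^ c := by exact_mod_cast this
  exact Nat.le_of_dvd (Nat.mul_pos hD (pow_pos hp.out.pos _)) h4

open scoped Classical in
theorem sieve_gen (p : ℕ) [hp : Fact p.Prime] (k : ℕ) (hk : 2 ≤ k) (D : ℕ) (hD : 0 < D)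
    (hDdiv : ∀ (N : ℤ) (f : ℤ[X]), f.natDegree ≤ k →
      (∀ n : ℤ, N ∣ f.derivative.eval n) → ∀ i, 1 ≤ i → N ∣ D * f.coeff i)
    (j c δ : ℕ) (hδj : δ + 1 ≤ j)
    (f : ℤ[X]) (hfk : f.natDegree ≤ k) (hdiv : ∀ i, 1 ≤ i → (p : ℤ) ^ c ∣ f.coeff i)
    (hor : c = j ∨ ∃ i, 1 ≤ i ∧ ¬ (p : ℤ) ^ (c + 1) ∣ f.coeff i)
    (hδ : ∀ n : ℤ, (p : ℤ) ^ δ ∣ f.derivative.eval n)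
    (hδ' : ∃ n : ℤ, ¬ (p : ℤ) ^ (δ + 1) ∣ f.derivative.eval n) :
    ‖∑ s ∈ (Finset.range (p ^ j)).filter (fun s : ℕ => ¬ (p : ℤ) ^ (δ + 1) ∣ f.derivative.eval (s : ℤ)),
      ex (p ^ j) (f.eval (s : ℤ))‖ ≤ ((D : ℝ) ^ 3 + 2 * k) * ((p : ℝ) ^ c) ^ 3 * √p ^ j := by
  have hp1 : (1 : ℝ) ≤ p := by exact_mod_cast hp.out.one_lt.le
  have hk1 : (1 : ℝ) ≤ k := by exact_mod_cast (by omega : 1 ≤ k)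
  have hD1 : (1 : ℝ) ≤ D := by exact_mod_cast hD
  have hpc : 1 ≤ (p : ℝ) ^ c := one_le_pow₀ hp1
  have hpc3 : (p : ℝ) ^ c ≤ ((p : ℝ) ^ c) ^ 3 := le_self_pow₀ hpc (by norm_num)
  have hs1 : 1 ≤ √(p : ℝ) := Real.one_le_sqrt.2 hp1
  have hss : √(p : ℝ) * √p = p := Real.mul_self_sqrt (by linarith)
  have hsj : 1 ≤ √(p : ℝ) ^ j := one_le_pow₀ hs1
  have hD3 : (D : ℝ) ≤ (D : ℝ) ^ 3 := le_self_pow₀ hD1 (by norm_num)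
  have hpp : Prime (p : ℤ) := Nat.prime_iff_prime_int.1 hp.out
  rcases le_or_gt (2 * δ + 2) j with hj | hj
  · have hv := shift_vanish p hp.out (j - δ - 1) δ (by omega) f
      (fun s => ¬ (p : ℤ) ^ (δ + 1) ∣ f.derivative.eval s) (by
        intro s z
        have h1 := f.derivative.sub_dvd_eval_sub (s + (p : ℤ) ^ (j - δ - 1) * z) s
        have h2 : (p : ℤ) ^ (δ + 1) ∣ f.derivative.eval (s + (p : ℤ) ^ (j - δ - 1) * z) - f.derivative.eval s := by
          refine dvd_trans (dvd_trans (pow_dvd_pow (p : ℤ) (by omega : δ + 1 ≤ j - δ - 1)) ⟨z, by ring⟩) h1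
        rw [not_iff_not]
        constructor
        · intro h; have := dvd_sub h h2; simpa using this
        · intro h; have := dvd_add h h2; simpa using this) (fun s _ => hδ s) (fun s hs => hs)
    rw [show j - δ - 1 + δ + 1 = j by omega] at hv
    have hv' : ∑ s ∈ (Finset.range (p ^ j)).filter (fun s : ℕ => ¬ (p : ℤ) ^ (δ + 1) ∣ f.derivative.eval (s : ℤ)),
        ex (p ^ j) (f.eval (s : ℤ)) = 0 := by convert hv
    rw [hv', norm_zero]; positivity
  · have htriv : ‖∑ s ∈ (Finset.range (p ^ j)).filter (fun s : ℕ => ¬ (p : ℤ) ^ (δ + 1) ∣ f.derivative.eval (s : ℤ)),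
      ex (p ^ j) (f.eval (s : ℤ))‖ ≤ (p : ℝ) ^ j := by
      refine (norm_sum_ex_le _ _ _).trans ?_
      have := (Finset.card_filter_le (Finset.range (p ^ j)) (fun s : ℕ => ¬ (p : ℤ) ^ (δ + 1) ∣ f.derivative.eval (s : ℤ)))
      rw [Finset.card_range] at this
      exact_mod_cast this
    rcases hor with rfl | ⟨i, hi, hn⟩
    · refine htriv.trans (hpc3.trans ?_)
      have : 1 ≤ ((D : ℝ) ^ 3 + 2 * k) * √p ^ c := by nlinarith
      calc ((p : ℝ) ^ c) ^ 3 ≤ ((p : ℝ) ^ c) ^ 3 * (((D : ℝ) ^ 3 + 2 * k) * √p ^ c) :=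
            le_mul_of_one_le_right (by positivity) this
        _ = _ := by ring
    have hpδ : p ^ δ ≤ D * p ^ c :=
      triv_coprime p D c δ hD _ (hdiv i hi) hn (hDdiv _ f hfk hδ i hi)
    have hpδ' : (p : ℝ) ^ δ ≤ D * (p : ℝ) ^ c := by exact_mod_cast hpδ
    rcases Nat.eq_zero_or_pos c with rfl | hc
    · simp only [pow_zero, mul_one, one_pow] at *
      rcases Nat.eq_zero_or_pos δ with rfl | hδ0
      · have hj1 : j = 1 := by omega
        subst hj1
        simp only [pow_one, zero_add] at *
        rcases le_or_gt p k with hpk | hpk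
        · have : (p : ℝ) ≤ k := by exact_mod_cast hpk
          have : ((D : ℝ) ^ 3 + 2 * k) * 1 ≤ ((D : ℝ) ^ 3 + 2 * k) * √p := by gcongr
          have : 0 ≤ (D : ℝ) ^ 3 := by positivity
          linarith
        · have hd : 1 ≤ (f.map (Int.castRingHom (ZMod p))).natDegree := by
            refine hi.trans (le_natDegree_of_ne_zero ?_)
            rw [coeff_map, eq_intCast, Ne, ZMod.intCast_zmod_eq_zero_iff_dvd]; exact hn
          have hd2 : (f.map (Int.castRingHom (ZMod p))).natDegree ≤ k := natDegree_map_le.trans hfk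
          have hw := weil_int p f hd (by omega)
          have hd3 : ((f.map (Int.castRingHom (ZMod p))).natDegree : ℝ) ≤ k := by exact_mod_cast hd2
          have hsplit := Finset.sum_filter_add_sum_filter_not (Finset.range p)
            (fun s : ℕ => ¬ (p : ℤ) ∣ f.derivative.eval (s : ℤ)) (fun s => ex p (f.eval (s : ℤ)))
          rw [← eq_sub_iff_add_eq] at hsplit
          rw [hsplit]
          have hGe : ∀ s : ℕ, ((f.derivative.map (Int.castRingHom (ZMod p))).eval (s : ZMod p)) =
              ((f.derivative.eval (s : ℤ) : ℤ) : ZMod p) := by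
            intro s
            have := Polynomial.eval_map_apply (Int.castRingHom (ZMod p)) (p := f.derivative) (s : ℤ)
            simpa only [eq_intCast, Int.cast_natCast] using this
          have hG0 : f.derivative.map (Int.castRingHom (ZMod p)) ≠ 0 := by
            intro h0
            obtain ⟨n, hn⟩ := hδ'
            apply hn
            have := Polynomial.eval_map_apply (Int.castRingHom (ZMod p)) (p := f.derivative) n
            rw [h0, eval_zero, eq_intCast, eq_comm, ZMod.intCast_zmod_eq_zero_iff_dvd] at this
            exact this
          have hcard : ((Finset.range p).filter (fun s : ℕ => ¬ ¬ (p : ℤ) ∣ f.derivative.eval (s : ℤ))).card ≤ k := by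
            calc _ ≤ (f.derivative.map (Int.castRingHom (ZMod p))).roots.toFinset.card := by
                  refine Finset.card_le_card_of_injOn (fun s => (s : ZMod p)) ?_ ?_
                  · intro s hs
                    have hs' := Finset.mem_filter.1 (Finset.mem_coe.1 hs)
                    rw [Finset.mem_coe, Multiset.mem_toFinset, mem_roots hG0, IsRoot, hGe,
                      ZMod.intCast_zmod_eq_zero_iff_dvd]
                    exact not_not.1 hs'.2
                  · intro s hs s' hs' h
                    have h1 := Finset.mem_range.1 (Finset.mem_filter.1 (Finset.mem_coe.1 hs)).1
                    have h2 := Finset.mem_range.1 (Finset.mem_filter.1 (Finset.mem_coe.1 hs')).1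
                    have := congrArg ZMod.val h
                    simpa [ZMod.val_cast_of_lt h1, ZMod.val_cast_of_lt h2] using this
              _ ≤ _ := Multiset.toFinset_card_le _
              _ ≤ _ := card_roots' _
              _ ≤ f.derivative.natDegree := natDegree_map_le
              _ ≤ k := (natDegree_derivative_le f).trans (by omega)
          have hcard' : (((Finset.range p).filter (fun s : ℕ => ¬ ¬ (p : ℤ) ∣ f.derivative.eval (s : ℤ))).card : ℝ) ≤ k := by
            exact_mod_cast hcard
          refine (norm_sub_le _ _).trans ?_
          have h5 := norm_sum_ex_le ((Finset.range p).filter (fun s : ℕ => ¬ ¬ (p : ℤ) ∣ f.derivative.eval (s : ℤ))) p (fun s => f.eval (s : ℤ))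
          have h6 : ((f.map (Int.castRingHom (ZMod p))).natDegree : ℝ) * √p ≤ k * √p := by gcongr
          have h7 : (k : ℝ) * 1 ≤ k * √p := by gcongr
          have h8 : 0 ≤ (D : ℝ) ^ 3 * √p := by positivity
          linarith
      · have hpD : p ≤ D := (Nat.le_self_pow hδ0.ne' p).trans (by exact_mod_cast hpδ')
        have hpD' : (p : ℝ) ≤ D := by exact_mod_cast hpD
        have h1 : (p : ℝ) ^ j ≤ (D : ℝ) ^ 3 := by
          calc (p : ℝ) ^ j ≤ (p : ℝ) ^ (2 * δ + 1) := pow_le_pow_right₀ hp1 (by omega)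
            _ = (p : ℝ) ^ δ * (p : ℝ) ^ δ * p := by ring
            _ ≤ D * D * D := by gcongr
            _ = _ := by ring
        have h2 : ((D : ℝ) ^ 3 + 2 * k) * 1 ≤ ((D : ℝ) ^ 3 + 2 * k) * √p ^ j := by gcongr
        linarith
    · refine htriv.trans ?_
      have hsp : √(p : ℝ) ≤ (p : ℝ) ^ c := by
        calc √(p : ℝ) ≤ √p * √p := by nlinarith
          _ = p := hss
          _ ≤ (p : ℝ) ^ c := le_self_pow₀ hp1 (by omega)
      calc (p : ℝ) ^ j = √p ^ j * √p ^ j := by rw [← mul_pow, hss]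
        _ ≤ √p ^ (2 * δ + 1) * √p ^ j := by
            gcongr
            omega
        _ = ((p : ℝ) ^ δ * √p) * √p ^ j := by rw [pow_succ, pow_mul, Real.sq_sqrt (by linarith)]
        _ ≤ (D * (p : ℝ) ^ c * (p : ℝ) ^ c) * √p ^ j := by gcongr
        _ ≤ (((D : ℝ) ^ 3 + 2 * k) * (p : ℝ) ^ c * ((p : ℝ) ^ c * (p : ℝ) ^ c)) * √p ^ j := by
            gcongr ?_ * _
            rw [mul_assoc, mul_assoc]
            apply mul_le_mul (by linarith) _ (by positivity) (by positivity)
            exact le_mul_of_one_le_left (by positivity) hpc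
        _ = _ := by ring
end

section
open Polynomial

theorem gamma_spec (g : ℤ[X]) (hg : g.derivative ≠ 0) (p : ℕ) (hp : p.Prime) :
    0 < gammaExp g p ∧ (∃ n : ℤ, ¬ (p : ℤ) ^ gammaExp g p ∣ g.derivative.eval n) ∧
      ∀ n : ℤ, (p : ℤ) ^ (gammaExp g p - 1) ∣ g.derivative.eval n := by
  have hne : {c : ℕ | 0 < c ∧ ¬ ∀ n : ℤ, ((p : ℤ) ^ c) ∣ (Polynomial.derivative g).eval n}.Nonempty := by
    obtain ⟨n, hn⟩ : ∃ n : ℤ, g.derivative.eval n ≠ 0 := by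
      by_contra! h
      exact hg (Polynomial.funext (by simpa using h))
    have hfin : FiniteMultiplicity (p : ℤ) (g.derivative.eval n) :=
      FiniteMultiplicity.of_prime_left (Nat.prime_iff_prime_int.1 hp) hn
    obtain ⟨m, hm⟩ := hfin
    exact ⟨m + 1, Nat.succ_pos _, fun h => hm (h n)⟩
  have h1 := Nat.sInf_mem hne
  refine ⟨h1.1, not_forall.1 h1.2, ?_⟩
  by_contra hcon
  rcases Nat.eq_zero_or_pos (gammaExp g p - 1) with h0 | h0
  · rw [h0] at hcon; simp at hcon
  · have := Nat.sInf_le (s := {c : ℕ | 0 < c ∧ ¬ ∀ n : ℤ, ((p : ℤ) ^ c) ∣ (Polynomial.derivative g).eval n})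
      ⟨h0, hcon⟩
    change gammaExp g p ≤ gammaExp g p - 1 at this
    omega

theorem Wq_mul (g : ℤ[X]) (hg : g.derivative ≠ 0) (Y : ℝ) (q₁ q₂ : ℕ) (h : q₁.Coprime q₂) (n : ℤ) :
    n ∈ WqSet g Y (q₁ * q₂) ↔ n ∈ WqSet g Y q₁ ∧ n ∈ WqSet g Y q₂ := by
  constructor
  · intro hn
    exact ⟨fun p hp hY hd => hn p hp hY (hd.mul_right _), fun p hp hY hd => hn p hp hY (hd.mul_left _)⟩
  · rintro ⟨h1, h2⟩ p hp hY hd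
    have hpp : IsPrimePow (p ^ gammaExp g p) :=
      hp.isPrimePow.pow (gamma_spec g hg p hp).1.ne'
    rcases (Nat.Coprime.isPrimePow_dvd_mul h hpp).1 hd with h | h
    · exact h1 p hp hY h
    · exact h2 p hp hY h

theorem Wq_periodic (g : ℤ[X]) (Y : ℝ) (q : ℕ) (m n : ℤ) (h : (q : ℤ) ∣ m - n) :
    m ∈ WqSet g Y q → n ∈ WqSet g Y q := by
  intro hm p hp hY hd hdn
  apply hm p hp hY hd
  have h1 := g.derivative.sub_dvd_eval_sub m n
  have h2 : (p : ℤ) ^ gammaExp g p ∣ g.derivative.eval m - g.derivative.eval n :=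
    dvd_trans (dvd_trans (by exact_mod_cast hd) h) h1
  have := dvd_add h2 hdn
  simpa using this

theorem crt_sum (q₁ q₂ : ℕ) (h1 : 0 < q₁) (h2 : 0 < q₂) (h : q₁.Coprime q₂) (F₁ F₂ : ℕ → ℂ)
    (hF₁ : ∀ s, F₁ (s % q₁) = F₁ s) (hF₂ : ∀ s, F₂ (s % q₂) = F₂ s) :
    ∑ s ∈ Finset.range (q₁ * q₂), F₁ s * F₂ s =
      (∑ s ∈ Finset.range q₁, F₁ s) * ∑ s ∈ Finset.range q₂, F₂ s := by
  rw [Finset.sum_mul_sum, ← Finset.sum_product']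
  refine Finset.sum_bij (fun s _ => (s % q₁, s % q₂)) ?_ ?_ ?_ ?_
  · intro s _
    rw [Finset.mem_product, Finset.mem_range, Finset.mem_range]
    exact ⟨Nat.mod_lt _ h1, Nat.mod_lt _ h2⟩
  · intro s hs t ht hst
    rw [Prod.mk.injEq] at hst
    have := (Nat.modEq_and_modEq_iff_modEq_mul h).1 hst
    exact this.eq_of_lt_of_lt (Finset.mem_range.1 hs) (Finset.mem_range.1 ht)
  · rintro ⟨x, y⟩ hxy
    rw [Finset.mem_product, Finset.mem_range, Finset.mem_range] at hxy
    refine ⟨Nat.chineseRemainder h x y, Finset.mem_range.2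
      (Nat.chineseRemainder_lt_mul h x y h1.ne' h2.ne'), ?_⟩
    have := (Nat.chineseRemainder h x y).2
    rw [Prod.mk.injEq]
    exact ⟨Eq.trans (b := x % q₁) this.1 (Nat.mod_eq_of_lt hxy.1),
      Eq.trans (b := y % q₂) this.2 (Nat.mod_eq_of_lt hxy.2)⟩
  · intro s _
    rw [hF₁, hF₂]

open scoped Classical in
noncomputable def TSum (g : ℤ[X]) (Y : ℝ) (q : ℕ) (a : ℤ) : ℂ :=
  ∑ s ∈ Finset.range q, if (s : ℤ) ∈ WqSet g Y q then ex q (a * g.eval (s : ℤ)) else 0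

theorem TSum_mul (g : ℤ[X]) (hg : g.derivative ≠ 0) (Y : ℝ) (q₁ q₂ : ℕ) (h1 : 0 < q₁) (h2 : 0 < q₂)
    (h : q₁.Coprime q₂) (a u v : ℤ) (huv : u * q₂ + v * q₁ = 1) :
    TSum g Y (q₁ * q₂) a = TSum g Y q₁ (u * a) * TSum g Y q₂ (v * a) := by
  classical
  have hper : ∀ (q : ℕ) (b : ℤ) (s : ℕ),
      (if ((s % q : ℕ) : ℤ) ∈ WqSet g Y q then ex q (b * g.eval ((s % q : ℕ) : ℤ)) else 0) =
      if (s : ℤ) ∈ WqSet g Y q then ex q (b * g.eval (s : ℤ)) else 0 := by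
    intro q b s
    have hd : (q : ℤ) ∣ (s : ℤ) - ((s % q : ℕ) : ℤ) := by
      rw [Int.natCast_mod]; exact Int.dvd_self_sub_emod
    have hd' : (q : ℤ) ∣ ((s % q : ℕ) : ℤ) - (s : ℤ) := by rw [← dvd_neg, neg_sub]; exact hd
    have e1 : ((s % q : ℕ) : ℤ) ∈ WqSet g Y q ↔ (s : ℤ) ∈ WqSet g Y q :=
      ⟨Wq_periodic g Y q _ _ hd', Wq_periodic g Y q _ _ hd⟩
    have e2 : ex q (b * g.eval ((s % q : ℕ) : ℤ)) = ex q (b * g.eval (s : ℤ)) := by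
      apply ex_congr
      rw [← mul_sub]
      exact Dvd.dvd.mul_left (dvd_trans hd' (g.sub_dvd_eval_sub _ _)) _
    simp only [e1, e2]
  rw [TSum, TSum, TSum, ← crt_sum q₁ q₂ h1 h2 h _ _ (hper q₁ (u * a)) (hper q₂ (v * a))]
  refine Finset.sum_congr rfl fun s _ => ?_
  have hex : ex (q₁ * q₂) (a * g.eval (s : ℤ)) =
      ex q₁ (u * a * g.eval (s : ℤ)) * ex q₂ (v * a * g.eval (s : ℤ)) := by
    rw [← ex_scale q₁ q₂ h2.ne', ← ex_scale q₂ q₁ h1.ne', mul_comm q₂ q₁, ← ex_add]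
    congr 1
    linear_combination (-(a * g.eval (s : ℤ))) * huv
  by_cases m1 : (s : ℤ) ∈ WqSet g Y q₁ <;> by_cases m2 : (s : ℤ) ∈ WqSet g Y q₂ <;>
    simp [Wq_mul g hg Y q₁ q₂ h, m1, m2, hex]

theorem TSum_bound (g : ℤ[X]) (hg : g.derivative ≠ 0) (Y : ℝ) (C θ : ℝ) (hC : 0 ≤ C)
    (Good : ℕ → Prop)
    (hpp : ∀ p j : ℕ, p.Prime → 0 < j → Good p → ∀ a : ℤ, IsCoprime a (p : ℤ) →
      ‖TSum g Y (p ^ j) a‖ ≤ (Nat.gcd (cont g) (p ^ j) : ℝ) ^ 3 * C * ((p ^ j : ℕ) : ℝ) ^ θ) (q : ℕ) :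
    0 < q → (∀ p, p.Prime → p ∣ q → Good p) → ∀ a : ℤ, IsCoprime a (q : ℤ) →
      ‖TSum g Y q a‖ ≤ (Nat.gcd (cont g) q : ℝ) ^ 3 * C ^ q.primeFactors.card * (q : ℝ) ^ θ := by
  induction q using Nat.recOnPosPrimePosCoprime with
  | zero => intro h; omega
  | one =>
    intro _ _ a _
    rw [TSum]
    simp only [Finset.range_one, Finset.sum_singleton]
    split_ifs
    · rw [ex_norm]; simp
    · simp
  | prime_pow p n hp hn =>
    intro _ hG a ha
    rw [Nat.primeFactors_prime_pow hn.ne' hp, Finset.card_singleton, pow_one]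
    refine hpp p n hp hn (hG p hp (dvd_pow_self p hn.ne')) a ?_
    push_cast at ha
    exact (IsCoprime.pow_right_iff hn).1 ha
  | coprime x y hx hy hxy ihx ihy =>
    intro _ hG a ha
    have hx0 : 0 < x := by omega
    have hy0 : 0 < y := by omega
    obtain ⟨v, u, huv⟩ := Nat.isCoprime_iff_coprime.2 hxy
    have huv' : u * (y : ℤ) + v * x = 1 := by linarith
    rw [TSum_mul g hg Y x y hx0 hy0 hxy a u v huv', norm_mul]
    push_cast at ha
    have hux : IsCoprime u (x : ℤ) := ⟨y, v, by linarith⟩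
    have hvy : IsCoprime v (y : ℤ) := ⟨x, u, by linarith⟩
    have h1 := ihx hx0 (fun p hp hd => hG p hp (hd.mul_right _)) (u * a) (hux.mul_left ha.of_mul_right_left)
    have h2 := ihy hy0 (fun p hp hd => hG p hp (hd.mul_left _)) (v * a) (hvy.mul_left ha.of_mul_right_right)
    have e1 : Nat.gcd (cont g) (x * y) = Nat.gcd (cont g) x * Nat.gcd (cont g) y :=
      Nat.Coprime.gcd_mul _ hxy
    have e2 : (x * y).primeFactors.card = x.primeFactors.card + y.primeFactors.card := by
      rw [hxy.primeFactors_mul, Finset.card_union_of_disjoint hxy.disjoint_primeFactors]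
    rw [e1, e2]
    push_cast
    rw [Real.mul_rpow (by positivity) (by positivity), pow_add]
    calc _ ≤ _ := mul_le_mul h1 h2 (norm_nonneg _) (by positivity)
      _ = _ := by ring
end

section
open Polynomial

theorem cont_coeff (g : ℤ[X]) (m : ℕ) : m ∣ cont g ↔ ∀ i, 1 ≤ i → (m : ℤ) ∣ g.coeff i := by
  unfold cont
  rw [Finset.dvd_gcd_iff]
  constructor
  · intro h i hi
    rcases le_or_gt i g.natDegree with h1 | h1
    · exact Int.natCast_dvd.2 (h i (Finset.mem_Icc.2 ⟨hi, h1⟩))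
    · rw [coeff_eq_zero_of_natDegree_lt h1]; exact dvd_zero _
  · intro h i hi
    exact Int.natCast_dvd.1 (h i (Finset.mem_Icc.1 hi).1)

theorem cop_dvd_iff (p : ℕ) (a x : ℤ) (d : ℕ) (ha : IsCoprime a p) :
    (p : ℤ) ^ d ∣ a * x ↔ (p : ℤ) ^ d ∣ x :=
  ⟨fun h => (ha.symm.pow_left (m := d)).dvd_of_dvd_mul_left h, fun h => h.mul_left a⟩

theorem pp_bound (k : ℕ) (hk : 2 ≤ k) (D : ℕ) (hD : 0 < D)
    (hDdiv : ∀ (N : ℤ) (f : ℤ[X]), f.natDegree ≤ k →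
      (∀ n : ℤ, N ∣ f.derivative.eval n) → ∀ i, 1 ≤ i → N ∣ D * f.coeff i)
    (g : ℤ[X]) (hgk : g.natDegree ≤ k) (hg : g.derivative ≠ 0) (Y : ℝ) (θ : ℝ) (hθ : 1 / 2 ≤ θ)
    (p j : ℕ) (hp : p.Prime) (hj : 0 < j) (hcase : (p : ℝ) ≤ Y ∨ θ = 1 - 1 / k)
    (a : ℤ) (ha : IsCoprime a p) :
    ‖TSum g Y (p ^ j) a‖ ≤ (Nat.gcd (cont g) (p ^ j) : ℝ) ^ 3 *
      ((D : ℝ) ^ 3 + 2 * k + k ^ 4 + D) * ((p ^ j : ℕ) : ℝ) ^ θ := by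
  classical
  haveI : Fact p.Prime := ⟨hp⟩
  obtain ⟨c, hcj, hc⟩ := (Nat.dvd_prime_pow hp).1 (Nat.gcd_dvd_right (cont g) (p ^ j))
  rw [hc]
  have hp1 : (1 : ℝ) ≤ p := by exact_mod_cast hp.one_lt.le
  have hp0 : (0 : ℝ) ≤ p := by linarith
  have hpj1 : (1 : ℝ) ≤ ((p ^ j : ℕ) : ℝ) := by push_cast; exact one_le_pow₀ hp1
  have hD1 : (1 : ℝ) ≤ D := by exact_mod_cast hD
  have hk1 : (2 : ℝ) ≤ k := by exact_mod_cast hk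
  have hQ1 : (1 : ℝ) ≤ ((p ^ j : ℕ) : ℝ) ^ θ := Real.one_le_rpow hpj1 (by linarith)
  have hdiv0 : ∀ i, 1 ≤ i → (p : ℤ) ^ c ∣ g.coeff i := by
    have := (cont_coeff g (p ^ c)).1 (hc ▸ Nat.gcd_dvd_left _ _)
    exact_mod_cast this
  have hor0 : c = j ∨ ∃ i, 1 ≤ i ∧ ¬ (p : ℤ) ^ (c + 1) ∣ g.coeff i := by
    rcases eq_or_lt_of_le hcj with h | h
    · exact Or.inl h
    · right
      by_contra! hcon
      have h1 : p ^ (c + 1) ∣ cont g := (cont_coeff g _).2 (by exact_mod_cast hcon)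
      have h2 := Nat.dvd_gcd h1 (pow_dvd_pow p (show c + 1 ≤ j from h))
      rw [hc, Nat.pow_dvd_pow_iff_le_right hp.one_lt] at h2
      omega
  set f : ℤ[X] := C a * g with hf
  have hfc : ∀ i, f.coeff i = a * g.coeff i := fun i => by rw [hf, coeff_C_mul]
  have hfd : ∀ n, f.derivative.eval n = a * g.derivative.eval n := fun n => by
    rw [hf, derivative_C_mul, eval_C_mul]
  have hfe : ∀ n, f.eval n = a * g.eval n := fun n => by rw [hf, eval_C_mul]
  have hfk : f.natDegree ≤ k := (natDegree_C_mul_le _ _).trans hgk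
  have hdiv : ∀ i, 1 ≤ i → (p : ℤ) ^ c ∣ f.coeff i := fun i hi => by
    rw [hfc]; exact (hdiv0 i hi).mul_left a
  have hor : c = j ∨ ∃ i, 1 ≤ i ∧ ¬ (p : ℤ) ^ (c + 1) ∣ f.coeff i := by
    refine hor0.imp_right ?_
    rintro ⟨i, hi, h⟩
    exact ⟨i, hi, by rw [hfc, cop_dvd_iff p a _ _ ha]; exact h⟩
  obtain ⟨hγ0, hγ1, hγ2⟩ := gamma_spec g hg p hp
  have hpc : 1 ≤ ((p : ℝ) ^ c) := one_le_pow₀ hp1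
  have hpc3 : (p : ℝ) ^ c ≤ ((p : ℝ) ^ c) ^ 3 := le_self_pow₀ hpc (by norm_num)
  have hmem : ∀ n : ℤ, n ∈ WqSet g Y (p ^ j) ↔
      ((p : ℝ) ≤ Y → gammaExp g p ≤ j → ¬ (p : ℤ) ^ gammaExp g p ∣ g.derivative.eval n) := by
    intro n
    constructor
    · intro h h1 h2
      exact h p hp h1 (pow_dvd_pow p h2)
    · intro h r hr hrY hrd
      have hr0 := (gamma_spec g hg r hr).1
      have : r ∣ p := hr.dvd_of_dvd_pow ((dvd_pow_self r hr0.ne').trans hrd)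
      have hrp : r = p := (Nat.prime_dvd_prime_iff_eq hr hp).1 this
      subst hrp
      exact h hrY ((Nat.pow_dvd_pow_iff_le_right hr.one_lt).1 hrd)
  have hX : (0 : ℝ) ≤ ((p : ℝ) ^ c) ^ 3 := by positivity
  have hk4 : (0 : ℝ) ≤ (k : ℝ) ^ 4 := by positivity
  have hD3 : (0 : ℝ) ≤ (D : ℝ) ^ 3 := by positivity
  have fin : ∀ (A B : ℝ), 0 ≤ A → A ≤ (D : ℝ) ^ 3 + 2 * k + k ^ 4 + D →
      0 ≤ B → B ≤ ((p ^ j : ℕ) : ℝ) ^ θ →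
      A * ((p : ℝ) ^ c) ^ 3 * B ≤ (((p ^ c : ℕ) : ℝ)) ^ 3 *
        ((D : ℝ) ^ 3 + 2 * k + k ^ 4 + D) * ((p ^ j : ℕ) : ℝ) ^ θ := by
    intro A B hA0 hA hB0 hB
    rw [mul_comm A, Nat.cast_pow p c]
    gcongr
  by_cases hγj : gammaExp g p ≤ j
  swap
  · have hall : ∀ n : ℤ, (p : ℤ) ^ j ∣ g.derivative.eval n := fun n =>
      (pow_dvd_pow _ (by omega)).trans (hγ2 n)
    have hb : p ^ j ≤ D * p ^ c := by
      rcases hor0 with h | ⟨i, hi, h⟩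
      · rw [h]; exact Nat.le_mul_of_pos_left _ hD
      · exact triv_coprime p D c j hD (g.coeff i) (hdiv0 i hi) h (hDdiv _ g hgk hall i hi)
    have hT : ‖TSum g Y (p ^ j) a‖ ≤ ((p ^ j : ℕ) : ℝ) := by
      unfold TSum
      rw [← Finset.sum_filter]
      refine (norm_sum_ex_le _ _ (fun s : ℕ => a * g.eval (s : ℤ))).trans ?_
      exact_mod_cast (Finset.card_filter_le _ _).trans (Finset.card_range _).le
    have hb' : ((p ^ j : ℕ) : ℝ) ≤ D * (p : ℝ) ^ c := by exact_mod_cast hb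
    refine le_trans ?_ (fin D 1 (by linarith) (by linarith) zero_le_one hQ1)
    rw [mul_one]
    exact hT.trans (hb'.trans (by gcongr))
  · by_cases hY : (p : ℝ) ≤ Y
    · have hδ : gammaExp g p - 1 + 1 = gammaExp g p := by omega
      have key := sieve_gen p k hk D hD hDdiv j c (gammaExp g p - 1) (by omega) f hfk hdiv hor
        (fun n => by rw [hfd]; exact (hγ2 n).mul_left a)
        (by
          obtain ⟨n, hn⟩ := hγ1
          exact ⟨n, by rw [hfd, cop_dvd_iff p a _ _ ha, hδ]; exact hn⟩)
      have hT : TSum g Y (p ^ j) a = ∑ s ∈ (Finset.range (p ^ j)).filter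
          (fun s : ℕ => ¬ (p : ℤ) ^ (gammaExp g p - 1 + 1) ∣ f.derivative.eval (s : ℤ)),
          ex (p ^ j) (f.eval (s : ℤ)) := by
        unfold TSum
        rw [← Finset.sum_filter]
        refine Finset.sum_congr ?_ (fun s _ => by rw [hfe])
        ext s
        rw [Finset.mem_filter, Finset.mem_filter, hmem, hfd, cop_dvd_iff p a _ _ ha, hδ]
        simp [hY, hγj]
      rw [hT]
      refine le_trans ?_ (fin ((D : ℝ) ^ 3 + 2 * k) (√p ^ j) (by positivity) (by linarith)
        (by positivity) ?_)
      · convert key using 3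
      · have : √(p : ℝ) ^ j = ((p ^ j : ℕ) : ℝ) ^ (1 / 2 : ℝ) := by
          rw [Real.sqrt_eq_rpow, ← Real.rpow_natCast, ← Real.rpow_mul hp0, Nat.cast_pow,
            ← Real.rpow_natCast, ← Real.rpow_mul hp0, mul_comm]
        rw [this]
        exact Real.rpow_le_rpow_of_exponent_le hpj1 hθ
    · have hθk : θ = 1 - 1 / k := hcase.resolve_left hY
      have hP1 : (1 : ℝ) ≤ (p : ℝ) ^ θ := Real.one_le_rpow hp1 (by linarith)
      have key := hua_gen p k hk ((p : ℝ) ^ θ) hP1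
        (by rw [Real.sqrt_eq_rpow]; exact Real.rpow_le_rpow_of_exponent_le hp1 hθ)
        (by
          intro σ h1 h2
          rw [← Real.rpow_natCast, ← Real.rpow_natCast, ← Real.rpow_mul hp0]
          apply Real.rpow_le_rpow_of_exponent_le hp1
          rw [hθk, Nat.cast_sub h1, sub_mul, one_mul, Nat.cast_one]
          have : (1 : ℝ) / k * σ ≤ 1 := by
            rw [div_mul_eq_mul_div, one_mul]
            exact div_le_one_of_le₀ (by exact_mod_cast h2) (by positivity)
          linarith) j c hcj f hfk hdiv hor
      have hT : TSum g Y (p ^ j) a = ∑ s ∈ Finset.range (p ^ j), ex (p ^ j) (f.eval (s : ℤ)) := by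
        unfold TSum
        refine Finset.sum_congr rfl (fun s _ => ?_)
        rw [if_pos ((hmem _).2 (fun h => absurd h hY)), hfe]
      rw [hT]
      refine key.trans (fin ((k : ℝ) ^ 4) _ hk4 (by linarith) (by positivity) (le_of_eq ?_))
      rw [← Real.rpow_natCast, ← Real.rpow_mul hp0, Nat.cast_pow,
            ← Real.rpow_natCast, ← Real.rpow_mul hp0, mul_comm]

open scoped Classical in
theorem sum_conv (g : ℤ[X]) (Y : ℝ) (q a : ℕ) :
    (∑ s ∈ (Finset.range q).filter (fun s => (s : ℤ) ∈ WqSet g Y q),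
              e ((a : ℝ) * ((g.eval (s : ℤ) : ℤ) : ℝ) / q)) = TSum g Y q a := by
  have h : (do let a ← Finset.range q; pure (a : ℤ) : Finset ℤ) =
      (Finset.range q).image (Nat.cast : ℕ → ℤ) := by
    ext x
    simp [Finset.bind_def, Finset.mem_sup, Finset.pure_def, eq_comm]
  unfold TSum
  rw [h, Finset.sum_filter, Finset.sum_image (fun x _ y _ h => by exact_mod_cast h)]
  refine Finset.sum_congr rfl (fun s _ => ?_)
  congr 1
  unfold e ex
  push_cast
  congr 1
  ring
end

open scoped Classical in
/-- Lemma 4.3 (Rice): complete exponential sum bounds over sieved residues: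
`|∑_{0 ≤ s < q, s ∈ W_q(g;Y)} e(a·g(s)/q)| ≪_k gcd(cont(g),q)³·C^{ω(q)}·q^{1-1/k}`,
with the stronger exponent `1/2` when `q ≤ Y`. -/
theorem stmt10 (k : ℕ) (hk : 2 ≤ k) :
    ∃ C₁ C₂ : ℝ, 0 < C₁ ∧ 0 < C₂ ∧
      ∀ g : Polynomial ℤ, g.natDegree = k →
        ∀ a q : ℕ, 0 < a → 0 < q → Nat.gcd a q = 1 → ∀ Y : ℝ, 0 < Y →
          (‖∑ s ∈ (Finset.range q).filter (fun s => (s : ℤ) ∈ WqSet g Y q),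
              e ((a : ℝ) * ((g.eval (s : ℤ) : ℤ) : ℝ) / q)‖ ≤
            C₁ * (Nat.gcd (cont g) q : ℝ) ^ 3 * C₂ ^ q.primeFactors.card *
              (q : ℝ) ^ ((1 : ℝ) - 1 / k)) ∧
          ((q : ℝ) ≤ Y →
            ‖∑ s ∈ (Finset.range q).filter (fun s => (s : ℤ) ∈ WqSet g Y q),
                e ((a : ℝ) * ((g.eval (s : ℤ) : ℤ) : ℝ) / q)‖ ≤
              C₁ * (Nat.gcd (cont g) q : ℝ) ^ 3 * C₂ ^ q.primeFactors.card *
                (q : ℝ) ^ ((1 : ℝ) / 2)) := by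
  obtain ⟨D, hD, hDdiv⟩ := derivative_val_div k
  have hk1 : (2 : ℝ) ≤ k := by exact_mod_cast hk
  have hC : 0 < (D : ℝ) ^ 3 + 2 * k + k ^ 4 + D := by positivity
  refine ⟨1, (D : ℝ) ^ 3 + 2 * k + k ^ 4 + D, one_pos, hC, ?_⟩
  intro g hgk a q _ hq haq Y _
  have hg : g.derivative ≠ 0 := by
    intro h
    have := Polynomial.natDegree_eq_zero_of_derivative_eq_zero h
    omega
  have hcop : IsCoprime (a : ℤ) (q : ℤ) := Nat.isCoprime_iff_coprime.2 haq
  rw [sum_conv, one_mul]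
  constructor
  · refine TSum_bound g hg Y _ _ hC.le (fun _ => True) ?_ q hq (fun _ _ _ => trivial) a hcop
    intro p j hp hj _ b hb
    refine pp_bound k hk D hD hDdiv g hgk.le hg Y _ ?_ p j hp hj (Or.inr rfl) b hb
    have : (1 : ℝ) / k ≤ 1 / 2 := one_div_le_one_div_of_le (by norm_num) hk1
    linarith
  · intro hqY
    refine TSum_bound g hg Y _ _ hC.le (fun p => (p : ℝ) ≤ Y) ?_ q hq ?_ a hcop
    · intro p j hp hj hpY b hb
      exact pp_bound k hk D hD hDdiv g hgk.le hg Y _ le_rfl p j hp hj (Or.inl hpY) b hb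
    · intro p _ hpq
      exact le_trans (by exact_mod_cast Nat.le_of_dvd hq hpq) hqY
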